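/- There exists an absolute constant C > 0 with the following property. Let d1, d2 ≥ 1, d = d1 + d2, α > 0, r ≥ 1, and let F : ℝ → (0,1) be differentiable with F, F' nonzero on [−α, α] and L_α, β_α, U_α finite. Let Π = (π_{kl}) be a probability distribution on [d1]×[d2] satisfying π_{kl} ≥ 1/(μ d1 d2) for all (k,l), for some μ ≥ 1. Let M* ∈ K_{Π,*}(r, α) = { M ∈ ℝ^{d1×d2} : ‖M‖_{w,*} ≤ α√r, ‖M‖_∞ ≤ α }, let S = ((i₁,j₁), …, (iₙ,jₙ)) be drawn i.i.d. from Π with n ≥ μ min(d1,d2) log(d); given S, let Y_{i_t,j_t} ∈ {−1, +1} be independent with P(Y_{i_t,j_t}=1) = F(M*_{i_t,j_t}), and let M̂_{w,tr} be any minimizer over K_{Π,*}(r, α) of the negative log-likelihood ℓ_S(M; Y). Then for any δ > 0, with probability at least 1 − δ, ‖M̂_{w,tr} − M*‖_Π² ≤ C β_α { L_α α √( μ r d log(d) / n ) + U_α √( log(4/δ)/n ) }. -/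

import Mathlib

open scoped BigOperators
open Matrix

/-- The elementwise `ℓ∞`-norm of a matrix: `max_{k,l} |M_{k,l}|`. -/
noncomputable def linfNorm {d1 d2 : ℕ} (M : Matrix (Fin d1) (Fin d2) ℝ) : ℝ :=
  ⨆ k, ⨆ l, |M k l|

/-- The trace-norm (nuclear norm) of a real matrix: the sum of its singular values,
i.e. the square roots of the eigenvalues of `M * Mᵀ`. -/
noncomputable def traceNorm {d1 d2 : ℕ} (M : Matrix (Fin d1) (Fin d2) ℝ) : ℝ :=
  ∑ i, Real.sqrt ((Matrix.isHermitian_mul_conjTranspose_self M).eigenvalues i)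

/-- The `Π`-weighted trace-norm
`‖M‖_{w,*} = ‖ diag(√π_{1·},…,√π_{d1·}) · M · diag(√π_{·1},…,√π_{·d2}) ‖_*`. -/
noncomputable def weightedTraceNorm {d1 d2 : ℕ} (π : Fin d1 → Fin d2 → ℝ)
    (M : Matrix (Fin d1) (Fin d2) ℝ) : ℝ :=
  traceNorm (Matrix.diagonal (fun k => Real.sqrt (∑ l, π k l)) * M *
    Matrix.diagonal (fun l => Real.sqrt (∑ k, π k l)))

/-- The negative log-likelihood `ℓ_S(M; Y)` of the matrix `M` for observed signs
`y : Fin n → Bool` (`y t = true` encodes `Y_{i_t,j_t} = +1`) at sampled index pairs `S`. -/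
noncomputable def negLogLik {d1 d2 n : ℕ} (F : ℝ → ℝ)
    (S : Fin n → Fin d1 × Fin d2) (y : Fin n → Bool)
    (M : Matrix (Fin d1) (Fin d2) ℝ) : ℝ :=
  ∑ t, if y t then Real.log (1 / F (M (S t).1 (S t).2))
    else Real.log (1 / (1 - F (M (S t).1 (S t).2)))

/-- The probability weight of the outcome `(S, y)` under i.i.d. sampling of the index pairs
from `Π` and, given `S`, independent signs with `P(Y_{i_t,j_t} = 1) = F(M*_{i_t,j_t})`. -/
noncomputable def sampleWeight {d1 d2 n : ℕ} (F : ℝ → ℝ) (π : Fin d1 → Fin d2 → ℝ)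
    (Mstar : Matrix (Fin d1) (Fin d2) ℝ)
    (S : Fin n → Fin d1 × Fin d2) (y : Fin n → Bool) : ℝ :=
  ∏ t, π (S t).1 (S t).2 *
    (if y t then F (Mstar (S t).1 (S t).2) else 1 - F (Mstar (S t).1 (S t).2))

/-!
The weighted squared error is at most `10 β` times the expected excess log-loss, because a map with
derivative at least `(4 β)^(-1/2)` in absolute value sends the entry `x` to the angle
`arcsin √(F x)`, and the squared distance of two angles is controlled by the Kullback–Leibler
divergence. As the estimator fits the sample at least as well as `M*`, its expected excess loss is
at most the supremum of an empirical process. McDiarmid's inequality, where the oscillation of the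
loss is `2 U`, concentrates the supremum around its mean. Symmetrization and contraction, where the
Lipschitz constant of the loss is `L`, bound the mean by the Rademacher complexity of the trace-norm
ball, which by duality is the expected operator norm of a random sign sum of matrices with a single
nonzero entry. The noncommutative Khintchine inequality bounds that norm by the largest row or
column total of the scaled sample, which has mean `O(n μ d)` once `n ≥ μ min(d1, d2) log d`.
-/

section FiniteProbability

variable {Ω Ω' ι T : Type*} [Fintype Ω] [Fintype Ω'] [Fintype ι]

/-- The expectation of `f` under the weights `w`, a probability vector when `w ∈ stdSimplex ℝ Ω`. -/
noncomputable def expectation (w f : Ω → ℝ) : ℝ := ∑ a, w a * f a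

lemma expectation_add (w f g : Ω → ℝ) :
    expectation w (fun a => f a + g a) = expectation w f + expectation w g := by
  simp only [expectation, mul_add, Finset.sum_add_distrib]

lemma expectation_sub (w f g : Ω → ℝ) :
    expectation w (fun a => f a - g a) = expectation w f - expectation w g := by
  simp only [expectation, mul_sub, Finset.sum_sub_distrib]

lemma expectation_const_mul (w f : Ω → ℝ) (c : ℝ) :
    expectation w (fun a => c * f a) = c * expectation w f := by
  simp only [expectation, Finset.mul_sum, mul_left_comm]

lemma expectation_sum (w : Ω → ℝ) (f : ι → Ω → ℝ) :
    expectation w (fun a => ∑ i, f i a) = ∑ i, expectation w (f i) := by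
  simp only [expectation, Finset.mul_sum]
  exact Finset.sum_comm

lemma expectation_comm (w : Ω → ℝ) (w' : Ω' → ℝ) (f : Ω → Ω' → ℝ) :
    expectation w (fun a => expectation w' (f a)) =
      expectation w' fun b => expectation w fun a => f a b := by
  simp only [expectation, Finset.mul_sum, mul_left_comm (w _) (w' _)]
  exact Finset.sum_comm

lemma expectation_expect (w : Ω → ℝ) (f : ι → Ω → ℝ) :
    expectation w (fun a => 𝔼 i, f i a) = 𝔼 i, expectation w (f i) := by
  simp only [expectation, Finset.mul_expect, Finset.expect_sum_comm]

lemma expectation_mono {w f g : Ω → ℝ} (hw : ∀ a, 0 ≤ w a) (hfg : ∀ a, f a ≤ g a) :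
    expectation w f ≤ expectation w g :=
  Finset.sum_le_sum fun a _ => mul_le_mul_of_nonneg_left (hfg a) (hw a)

lemma expectation_const {w : Ω → ℝ} (hw : w ∈ stdSimplex ℝ Ω) (c : ℝ) :
    expectation w (fun _ => c) = c := by
  rw [expectation, ← Finset.sum_mul, hw.2, one_mul]

lemma abs_expectation_sub_expectation_le {w f g : Ω → ℝ} (hw : w ∈ stdSimplex ℝ Ω) {c : ℝ}
    (hfg : ∀ a, |f a - g a| ≤ c) : |expectation w f - expectation w g| ≤ c := by
  rw [← expectation_sub, abs_le]
  constructor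
  · rw [← expectation_const hw (-c)]
    exact expectation_mono hw.1 fun a => (abs_le.mp (hfg a)).1
  · rw [← expectation_const hw c]
    exact expectation_mono hw.1 fun a => (abs_le.mp (hfg a)).2

lemma exp_expectation_le {w : Ω → ℝ} (hw : w ∈ stdSimplex ℝ Ω) (f : Ω → ℝ) :
    Real.exp (expectation w f) ≤ expectation w fun a => Real.exp (f a) :=
  convexOn_exp.map_sum_le (fun a _ => hw.1 a) hw.2 fun _ _ => Set.mem_univ _

lemma expectation_sqrt_le {w f : Ω → ℝ} (hw : w ∈ stdSimplex ℝ Ω) (hf : ∀ a, 0 ≤ f a) :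
    expectation w (fun a => √(f a)) ≤ √(expectation w f) :=
  Real.strictConcaveOn_sqrt.concaveOn.le_map_sum (fun a _ => hw.1 a) hw.2 fun a _ => hf a

lemma expectation_iSup_ge [Finite T] [Nonempty T] {w : Ω → ℝ} (hw : ∀ a, 0 ≤ w a)
    (f : T → Ω → ℝ) : ⨆ τ, expectation w (f τ) ≤ expectation w fun a => ⨆ τ, f τ a :=
  ciSup_le fun τ => expectation_mono hw fun a => Finite.le_ciSup (fun τ => f τ a) τ

/-- Markov's inequality, bounding the probability of `G` from below. -/
lemma one_sub_expectation_le_sum_indicator {w Y : Ω → ℝ} (hw : w ∈ stdSimplex ℝ Ω) {G : Set Ω}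
    (hY : ∀ a, 0 ≤ Y a) (hG : ∀ a ∉ G, 1 ≤ Y a) :
    1 - expectation w Y ≤ ∑ a, G.indicator w a := by
  classical
  rw [← hw.2, expectation, ← Finset.sum_sub_distrib]
  refine Finset.sum_le_sum fun a _ => ?_
  by_cases ha : a ∈ G
  · simpa only [Set.indicator_of_mem ha, sub_le_self_iff] using mul_nonneg (hw.1 a) (hY a)
  · simpa only [Set.indicator_of_notMem ha, sub_nonpos] using
      le_mul_of_one_le_right (hw.1 a) (hG a ha)

/-- The law of a family, indexed by `ι`, of independent draws from `w`. -/
def productWeight (w : Ω → ℝ) (x : ι → Ω) : ℝ := ∏ t, w (x t)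

variable [DecidableEq ι]

lemma expectation_productWeight_prod (w : Ω → ℝ) (g : ι → Ω → ℝ) :
    expectation (productWeight w) (fun x => ∏ t, g t (x t)) = ∏ t, expectation w (g t) := by
  simp only [expectation, productWeight, ← Finset.prod_mul_distrib, Finset.prod_univ_sum,
    Fintype.piFinset_univ]

lemma productWeight_mem_stdSimplex {w : Ω → ℝ} (hw : w ∈ stdSimplex ℝ Ω) :
    productWeight w ∈ stdSimplex ℝ (ι → Ω) := by
  refine ⟨fun x => Finset.prod_nonneg fun t _ => hw.1 _, ?_⟩
  simpa [expectation, hw.2] using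
    expectation_productWeight_prod w fun (_ : ι) (_ : Ω) => 1

lemma expectation_productWeight_apply {w : Ω → ℝ} (hw : w ∈ stdSimplex ℝ Ω) (f : Ω → ℝ)
    (t : ι) : expectation (productWeight w) (fun x : ι → Ω => f (x t)) = expectation w f := by
  have hite : ∀ s, expectation w (fun a => if s = t then f a else 1) =
      if s = t then expectation w f else 1 := fun s => by
    split_ifs
    exacts [rfl, expectation_const hw 1]
  simpa [hite] using
    expectation_productWeight_prod w fun s a => if s = t then f a else 1

lemma sum_fin_succ_pi (n : ℕ) (f : (Fin (n + 1) → Ω) → ℝ) :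
    ∑ x, f x = ∑ a, ∑ x : Fin n → Ω, f (Fin.cons a x) := by
  rw [← Fintype.sum_prod_type']
  exact (Fintype.sum_equiv (Fin.consEquiv fun _ : Fin (n + 1) => Ω) _ _ fun _ => rfl).symm

lemma expectation_productWeight_succ (w : Ω → ℝ) (n : ℕ) (f : (Fin (n + 1) → Ω) → ℝ) :
    expectation (productWeight w) f =
      expectation w fun a => expectation (productWeight w) fun x : Fin n → Ω =>
        f (Fin.cons a x) := by
  simp only [expectation, productWeight, sum_fin_succ_pi, Fin.prod_univ_succ, Fin.cons_zero,
    Fin.cons_succ, Finset.mul_sum, mul_assoc]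

end FiniteProbability

section McDiarmid

variable {Ω : Type*} [Fintype Ω] {w : Ω → ℝ} {c : ℝ} {n : ℕ}

/-- Hoeffding's lemma for a function of oscillation `c`, with `c ^ 2 / 2` in place of the optimal
`c ^ 2 / 8`. -/
lemma expectation_exp_sub_expectation_le (hw : w ∈ stdSimplex ℝ Ω) {g : Ω → ℝ}
    (hg : ∀ a b, |g a - g b| ≤ c) :
    expectation w (fun a => Real.exp (g a - expectation w g)) ≤ Real.exp (c ^ 2 / 2) := by
  have symmetrize : expectation w (fun a => Real.exp (g a - expectation w g)) ≤
      expectation w fun a => expectation w fun b => Real.exp (g a - g b) := by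
    refine expectation_mono hw.1 fun a => ?_
    simpa only [expectation_sub, expectation_const hw] using
      exp_expectation_le hw fun b => g a - g b
  have swap : expectation w (fun a => expectation w fun b => Real.exp (g a - g b)) =
      expectation w fun a => expectation w fun b => Real.exp (-(g a - g b)) := by
    simp only [neg_sub]
    exact expectation_comm w w fun a b => Real.exp (g a - g b)
  have average : expectation w (fun a => expectation w fun b => Real.cosh (g a - g b)) =
      expectation w fun a => expectation w fun b => Real.exp (g a - g b) := by
    simp only [Real.cosh_eq, div_eq_inv_mul, expectation_const_mul, expectation_add, ← swap]
    ring
  have cosh_le : ∀ a b, Real.cosh (g a - g b) ≤ Real.exp (c ^ 2 / 2) := fun a b =>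
    (Real.cosh_le_exp_half_sq _).trans <| Real.exp_le_exp.mpr <| by
      rw [← sq_abs]
      have := hg a b
      gcongr
  calc expectation w (fun a => Real.exp (g a - expectation w g))
      ≤ expectation w fun a => expectation w fun b => Real.cosh (g a - g b) :=
        symmetrize.trans average.ge
    _ ≤ expectation w fun _ => expectation w fun _ => Real.exp (c ^ 2 / 2) :=
        expectation_mono hw.1 fun a => expectation_mono hw.1 fun b => cosh_le a b
    _ = Real.exp (c ^ 2 / 2) := by simp only [expectation_const hw]

/-- McDiarmid's bound on the moment generating function. -/
lemma expectation_exp_sub_expectation_le_of_bounded_differences (hw : w ∈ stdSimplex ℝ Ω)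
    {Z : (Fin n → Ω) → ℝ} (hZ : ∀ x t a, |Z x - Z (Function.update x t a)| ≤ c) :
    expectation (productWeight w)
      (fun x => Real.exp (Z x - expectation (productWeight w) Z)) ≤
        Real.exp (n * (c ^ 2 / 2)) := by
  induction n with
  | zero => simp [expectation, productWeight]
  | succ n ih =>
    set g : Ω → ℝ := fun a => expectation (productWeight w) fun x : Fin n → Ω => Z (Fin.cons a x)
    have hg : ∀ a b, |g a - g b| ≤ c := fun a b =>
      abs_expectation_sub_expectation_le (productWeight_mem_stdSimplex hw) fun x => by
        simpa only [Fin.update_cons_zero] using hZ (Fin.cons a x) 0 b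
    have inner : ∀ a, expectation (productWeight w)
        (fun x : Fin n → Ω => Real.exp (Z (Fin.cons a x) - g a)) ≤ Real.exp (n * (c ^ 2 / 2)) :=
      fun a => ih fun x t b => by
        simpa only [← Fin.cons_update] using hZ (Fin.cons a x) t.succ b
    simp only [expectation_productWeight_succ w n]
    change expectation w (fun a => expectation (productWeight w) fun x : Fin n → Ω =>
      Real.exp (Z (Fin.cons a x) - expectation w g)) ≤ _
    calc expectation w (fun a => expectation (productWeight w) fun x : Fin n → Ω =>
          Real.exp (Z (Fin.cons a x) - expectation w g))
        = expectation w (fun a => Real.exp (g a - expectation w g) *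
            expectation (productWeight w) fun x : Fin n → Ω =>
              Real.exp (Z (Fin.cons a x) - g a)) := by
          simp only [← expectation_const_mul, ← Real.exp_add, add_comm (_ - expectation w g),
            sub_add_sub_cancel]
      _ ≤ expectation w (fun a => Real.exp (n * (c ^ 2 / 2)) *
            Real.exp (g a - expectation w g)) := by
          refine expectation_mono hw.1 fun a => ?_
          rw [mul_comm]
          exact mul_le_mul_of_nonneg_right (inner a) (Real.exp_nonneg _)
      _ ≤ Real.exp (n * (c ^ 2 / 2)) * Real.exp (c ^ 2 / 2) := by
          rw [expectation_const_mul]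
          exact mul_le_mul_of_nonneg_left (expectation_exp_sub_expectation_le hw hg)
            (Real.exp_nonneg _)
      _ = Real.exp ((n + 1 : ℕ) * (c ^ 2 / 2)) := by
          rw [← Real.exp_add]
          push_cast
          ring_nf

lemma expectation_exp_mul_sub_expectation_le_of_bounded_differences (hw : w ∈ stdSimplex ℝ Ω)
    {Z : (Fin n → Ω) → ℝ} (hZ : ∀ x t a, |Z x - Z (Function.update x t a)| ≤ c) {θ : ℝ}
    (hθ : 0 ≤ θ) :
    expectation (productWeight w)
      (fun x => Real.exp (θ * (Z x - expectation (productWeight w) Z))) ≤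
        Real.exp (n * ((θ * c) ^ 2 / 2)) := by
  simp only [mul_sub]
  rw [← expectation_const_mul]
  refine expectation_exp_sub_expectation_le_of_bounded_differences hw fun x t a => ?_
  rw [← mul_sub, abs_mul, abs_of_nonneg hθ]
  exact mul_le_mul_of_nonneg_left (hZ x t a) hθ

/-- McDiarmid's inequality. -/
lemma one_sub_le_sum_indicator_of_bounded_differences (hw : w ∈ stdSimplex ℝ Ω) (hc : 0 < c)
    (hn : 0 < n) {Z : (Fin n → Ω) → ℝ}
    (hZ : ∀ x t a, |Z x - Z (Function.update x t a)| ≤ c) {δ : ℝ} (hδ : 0 < δ) :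
    1 - δ ≤ ∑ x, {x | Z x ≤ expectation (productWeight w) Z +
      c * √(2 * n * Real.log (1 / δ))}.indicator (productWeight w) x := by
  have hw' : productWeight w ∈ stdSimplex ℝ (Fin n → Ω) := productWeight_mem_stdSimplex hw
  rcases lt_or_ge 1 δ with hδ1 | hδ1
  · exact (sub_neg.mpr hδ1).le.trans <|
      Finset.sum_nonneg fun x _ => Set.indicator_nonneg (fun x _ => hw'.1 x) x
  set EZ := expectation (productWeight w) Z
  set ℓ := Real.log (1 / δ) with hℓ
  set s := √(2 * n * ℓ)
  have : (0 : ℝ) < n := by exact_mod_cast hn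
  have hs : s ^ 2 = 2 * n * ℓ := Real.sq_sqrt <| mul_nonneg (by positivity) <|
    Real.log_nonneg ((one_le_div hδ).mpr hδ1)
  -- This `θ` minimises the Chernoff bound `exp (n (θ c) ^ 2 / 2 - θ c s)`.
  set θ := s / (n * c)
  have hθ : 0 ≤ θ := by positivity
  have exponent : (n : ℝ) * ((θ * c) ^ 2 / 2) = ℓ := by
    rw [show θ * c = s / n by simp only [θ]; field_simp, div_pow, hs]
    field_simp
  have shift : θ * (c * s) = 2 * ℓ := by
    rw [show θ * (c * s) = s ^ 2 / n by simp only [θ]; field_simp, hs]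
    field_simp
  have mgf := expectation_exp_mul_sub_expectation_le_of_bounded_differences hw hZ hθ
  have chernoff : expectation (productWeight w)
      (fun x => Real.exp (-(2 * ℓ)) * Real.exp (θ * (Z x - EZ))) ≤ δ := by
    rw [expectation_const_mul]
    calc Real.exp (-(2 * ℓ)) * _ ≤ Real.exp (-(2 * ℓ)) * Real.exp ℓ := by
          rw [← exponent]; gcongr
      _ = δ := by
        rw [← Real.exp_add, show -(2 * ℓ) + ℓ = -ℓ by ring, hℓ, one_div, Real.log_inv, neg_neg,
          Real.exp_log hδ]
  refine (sub_le_sub_left chernoff 1).trans <|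
    one_sub_expectation_le_sum_indicator hw' (fun x => by positivity) fun x hx => ?_
  have hx' : EZ + c * s < Z x := not_le.mp hx
  rw [← Real.exp_add, Real.one_le_exp_iff]
  linarith [mul_le_mul_of_nonneg_left (show c * s ≤ Z x - EZ by linarith) hθ]

end McDiarmid

section EmpiricalProcess

variable {Ω ι T : Type*} [Fintype Ω] [Fintype ι]

lemma iSup_add_add_iSup_sub_le [Finite T] [Nonempty T] (b : T → ℝ) {p q : T → ℝ}
    (hpq : ∀ τ τ', |p τ - p τ'| ≤ |q τ - q τ'|) :
    (⨆ τ, (b τ + p τ)) + ⨆ τ, (b τ - p τ) ≤ (⨆ τ, (b τ + q τ)) + ⨆ τ, (b τ - q τ) := by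
  obtain ⟨τ, hτ⟩ := exists_eq_ciSup_of_finite (f := fun τ => b τ + p τ)
  obtain ⟨τ', hτ'⟩ := exists_eq_ciSup_of_finite (f := fun τ => b τ - p τ)
  rw [← hτ, ← hτ']
  have add_le := Finite.le_ciSup fun τ => b τ + q τ
  have sub_le := Finite.le_ciSup fun τ => b τ - q τ
  rcases abs_cases (q τ - q τ') with ⟨habs, _⟩ | ⟨habs, _⟩
  · linarith [le_of_abs_le (hpq τ τ'), add_le τ, sub_le τ']
  · linarith [le_of_abs_le (hpq τ τ'), add_le τ', sub_le τ]

variable [DecidableEq ι]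

/-- The Rademacher complexity of the vectors `u τ`, as a sum over the coordinates rather than a
mean. The random signs are the units of `ℤ`. -/
noncomputable def rademacherComplexity (u : T → ι → ℝ) : ℝ :=
  𝔼 e : ι → ℤˣ, ⨆ τ, ∑ t, e t • u τ t

lemma rademacherComplexity_const_mul {c : ℝ} (hc : 0 ≤ c) (u : T → ι → ℝ) :
    rademacherComplexity (fun τ t => c * u τ t) = c * rademacherComplexity u := by
  simp only [rademacherComplexity, Finset.mul_expect, Real.mul_iSup_of_nonneg hc, Finset.mul_sum,
    mul_smul_comm]

lemma expect_signs_mul_right {M : Type*} [AddCommMonoid M] [Module ℚ≥0 M]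
    (f : (ι → ℤˣ) → M) (a : ι → ℤˣ) : 𝔼 e, f (e * a) = 𝔼 e, f e :=
  Fintype.expect_equiv (Equiv.mulRight a) _ _ fun _ => rfl

lemma sum_mul_mulSingle_neg_one_smul {M : Type*} [AddCommGroup M] (e : ι → ℤˣ) (t : ι)
    (u : ι → M) :
    ∑ s, (e * Pi.mulSingle t (-1) : ι → ℤˣ) s • u s =
      ∑ s ∈ Finset.univ.erase t, e s • u s - e t • u t := by
  rw [← Finset.sum_erase_add _ _ (Finset.mem_univ t), sub_eq_add_neg]
  congr 1
  · refine Finset.sum_congr rfl fun s hs => ?_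
    rw [Pi.mul_apply, Pi.mulSingle_eq_of_ne (Finset.ne_of_mem_erase hs), mul_one]
  · rw [Pi.mul_apply, Pi.mulSingle_eq_same, mul_neg_one, Units.neg_smul]

lemma two_mul_expect_signs (f : (ι → ℤˣ) → ℝ) (t : ι) :
    2 * 𝔼 e, f e = 𝔼 e, (f e + f (e * Pi.mulSingle t (-1))) := by
  rw [Finset.expect_add_distrib, expect_signs_mul_right f, two_mul]

variable [Finite T] [Nonempty T]

lemma rademacherComplexity_mono_of_eq_off {u v : T → ι → ℝ} (t : ι)
    (heq : ∀ τ s, s ≠ t → v τ s = u τ s)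
    (hle : ∀ τ τ', |v τ t - v τ' t| ≤ |u τ t - u τ' t|) :
    rademacherComplexity v ≤ rademacherComplexity u := by
  refine le_of_mul_le_mul_left ?_ two_pos
  rw [rademacherComplexity, rademacherComplexity, two_mul_expect_signs _ t,
    two_mul_expect_signs _ t]
  refine Finset.expect_le_expect fun e _ => ?_
  simp only [sum_mul_mulSingle_neg_one_smul]
  simp only [← Finset.sum_erase_add _ _ (Finset.mem_univ t)]
  have hrest : ∀ τ, ∑ s ∈ Finset.univ.erase t, e s • v τ s =
      ∑ s ∈ Finset.univ.erase t, e s • u τ s := fun τ =>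
    Finset.sum_congr rfl fun s hs => by rw [heq τ s (Finset.ne_of_mem_erase hs)]
  simp only [hrest]
  refine iSup_add_add_iSup_sub_le _ fun τ τ' => ?_
  rcases Int.units_eq_one_or (e t) with he | he
  · simpa only [he, one_smul] using hle τ τ'
  · simpa only [he, Units.neg_smul, one_smul, neg_sub_neg, abs_sub_comm] using hle τ τ'

/-- The Ledoux–Talagrand contraction principle; the coordinates are exchanged one at a time. -/
lemma rademacherComplexity_contraction {u v : T → ι → ℝ}
    (hle : ∀ t τ τ', |v τ t - v τ' t| ≤ |u τ t - u τ' t|) :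
    rademacherComplexity v ≤ rademacherComplexity u := by
  have exchange : ∀ s : Finset ι,
      rademacherComplexity v ≤ rademacherComplexity fun τ t => if t ∈ s then u τ t else v τ t := by
    intro s
    induction s using Finset.induction_on with
    | empty => simp
    | insert t s hts ih =>
      refine ih.trans (rademacherComplexity_mono_of_eq_off t (fun τ r hr => ?_) fun τ τ' => ?_)
      · simp [Finset.mem_insert, hr]
      · simpa [hts] using hle t τ τ'
  simpa using exchange Finset.univ

lemma expect_iSup_sum_smul_sub_le (u v : T → ι → ℝ) :
    𝔼 e : ι → ℤˣ, ⨆ τ, ∑ t, e t • (u τ t - v τ t) ≤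
      rademacherComplexity u + rademacherComplexity v := by
  have neg : rademacherComplexity v = 𝔼 e : ι → ℤˣ, ⨆ τ, ∑ t, -(e t • v τ t) := by
    rw [rademacherComplexity, ← expect_signs_mul_right _ (-1)]
    simp only [mul_neg_one, Pi.neg_apply, Units.neg_smul]
  rw [neg, rademacherComplexity, ← Finset.expect_add_distrib]
  refine Finset.expect_le_expect fun e _ => ciSup_le fun τ => ?_
  simp only [sub_eq_add_neg, smul_add, smul_neg, Finset.sum_add_distrib]
  exact add_le_add (Finite.le_ciSup (fun τ => ∑ t, e t • u τ t) τ)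
    (Finite.le_ciSup (fun τ => ∑ t, -(e t • v τ t)) τ)

/-- The supremum over `f` of the total downward deviation of `f τ` from its mean, on the
sample `x`. -/
noncomputable def supDeviation (w : Ω → ℝ) (f : T → Ω → ℝ) (x : ι → Ω) : ℝ :=
  ⨆ τ, ∑ t, (expectation w (f τ) - f τ (x t))

omit [DecidableEq ι] [Nonempty T] in
lemma card_mul_expectation_le_supDeviation (w : Ω → ℝ) {f : T → Ω → ℝ} {x : ι → Ω} {τ : T}
    (hf : ∑ t, f τ (x t) ≤ 0) :
    Fintype.card ι * expectation w (f τ) ≤ supDeviation w f x := by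
  refine le_trans ?_ (Finite.le_ciSup (fun τ => ∑ t, (expectation w (f τ) - f τ (x t))) τ)
  rw [Finset.sum_sub_distrib, Finset.sum_const, nsmul_eq_mul, Finset.card_univ]
  linarith

/-- Exchanging, between two independent samples, the coordinates where `e t = -1`. -/
lemma expectation_productWeight_swap (w : Ω → ℝ) (g : (ι → Ω) → (ι → Ω) → ℝ) (e : ι → ℤˣ) :
    expectation (productWeight w) (fun x => expectation (productWeight w) (g x)) =
      expectation (productWeight w) fun x => expectation (productWeight w) fun x' =>
        g (fun t => if e t = 1 then x t else x' t) fun t => if e t = 1 then x' t else x t := by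
  let swap : (ι → Ω) × (ι → Ω) → (ι → Ω) × (ι → Ω) := fun p =>
    (fun t => if e t = 1 then p.1 t else p.2 t, fun t => if e t = 1 then p.2 t else p.1 t)
  have involutive : Function.Involutive swap := fun p => by
    ext t <;> by_cases h : e t = 1 <;> simp [swap, h]
  have weight : ∀ p, productWeight w (swap p).1 * productWeight w (swap p).2 =
      productWeight w p.1 * productWeight w p.2 := fun p => by
    simp only [productWeight, ← Finset.prod_mul_distrib]
    refine Finset.prod_congr rfl fun t _ => ?_
    by_cases h : e t = 1
    · simp [swap, h]
    · simp [swap, h, mul_comm]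
  simp only [expectation, Finset.mul_sum, ← mul_assoc]
  rw [← Fintype.sum_prod_type', ← Fintype.sum_prod_type',
    ← Equiv.sum_comp (involutive.toPerm swap)]
  exact Finset.sum_congr rfl fun p _ => congrArg (· * _) (weight p)

/-- Symmetrization, through an independent ghost sample `x'`. -/
lemma expectation_supDeviation_le {w : Ω → ℝ} (hw : w ∈ stdSimplex ℝ Ω) (f : T → Ω → ℝ) :
    expectation (productWeight w) (supDeviation w f : (ι → Ω) → ℝ) ≤
      2 * expectation (productWeight w) fun x : ι → Ω =>
        rademacherComplexity fun τ t => f τ (x t) := by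
  have hw' : productWeight w ∈ stdSimplex ℝ (ι → Ω) := productWeight_mem_stdSimplex hw
  have ghost : ∀ x : ι → Ω, supDeviation w f x ≤
      expectation (productWeight w) fun x' : ι → Ω => ⨆ τ, ∑ t, (f τ (x' t) - f τ (x t)) :=
    fun x => by
      refine le_trans (le_of_eq ?_) (expectation_iSup_ge hw'.1 _)
      simp only [supDeviation, expectation_sum, expectation_sub, expectation_const hw',
        expectation_productWeight_apply hw]
  have signs : ∀ (e : ι → ℤˣ), expectation (productWeight w) (fun x : ι → Ω =>
      expectation (productWeight w) fun x' : ι → Ω => ⨆ τ, ∑ t, (f τ (x' t) - f τ (x t))) =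
      expectation (productWeight w) fun x : ι → Ω => expectation (productWeight w)
        fun x' : ι → Ω => ⨆ τ, ∑ t, e t • (f τ (x' t) - f τ (x t)) := fun e => by
    have sign : ∀ (x x' : ι → Ω) τ t, f τ (if e t = 1 then x' t else x t) -
        f τ (if e t = 1 then x t else x' t) = e t • (f τ (x' t) - f τ (x t)) :=
      fun x x' τ t => by rcases Int.units_eq_one_or (e t) with he | he <;> simp [he]
    rw [expectation_productWeight_swap w _ e]
    simp only [sign]
  calc expectation (productWeight w) (supDeviation w f : (ι → Ω) → ℝ)
      ≤ expectation (productWeight w) fun x : ι → Ω => expectation (productWeight w)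
          fun x' : ι → Ω => ⨆ τ, ∑ t, (f τ (x' t) - f τ (x t)) := expectation_mono hw'.1 ghost
    _ = expectation (productWeight w) fun x : ι → Ω => expectation (productWeight w)
          fun x' : ι → Ω => 𝔼 e : ι → ℤˣ, ⨆ τ, ∑ t, e t • (f τ (x' t) - f τ (x t)) := by
        simp only [expectation_expect, ← signs, Fintype.expect_const]
    _ ≤ expectation (productWeight w) fun x : ι → Ω => expectation (productWeight w)
          fun x' : ι → Ω => (rademacherComplexity fun τ t => f τ (x' t)) +
            rademacherComplexity fun τ t => f τ (x t) :=
        expectation_mono hw'.1 fun x => expectation_mono hw'.1 fun x' =>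
          expect_iSup_sum_smul_sub_le _ _
    _ = _ := by simp only [expectation_add, expectation_const hw', two_mul]

lemma supDeviation_le_supDeviation_update_add (w : Ω → ℝ) {f : T → Ω → ℝ} {c : ℝ}
    (hf : ∀ τ a b, |f τ a - f τ b| ≤ c) (x : ι → Ω) (t : ι) (a : Ω) :
    supDeviation w f x ≤ supDeviation w f (Function.update x t a) + c := by
  refine ciSup_le fun τ => ?_
  have change : ∑ s, (expectation w (f τ) - f τ (x s)) =
      ∑ s, (expectation w (f τ) - f τ (Function.update x t a s)) + (f τ a - f τ (x t)) := by
    rw [← sub_eq_iff_eq_add', ← Finset.sum_sub_distrib, Fintype.sum_eq_single t fun s hs => by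
      simp [Function.update_of_ne hs]]
    simp
  rw [change]
  exact add_le_add
    (Finite.le_ciSup (fun τ => ∑ s, (expectation w (f τ) - f τ (Function.update x t a s))) τ)
    (le_of_abs_le (hf τ a (x t)))

lemma abs_supDeviation_sub_supDeviation_update_le (w : Ω → ℝ) {f : T → Ω → ℝ} {c : ℝ}
    (hf : ∀ τ a b, |f τ a - f τ b| ≤ c) (x : ι → Ω) (t : ι) (a : Ω) :
    |supDeviation w f x - supDeviation w f (Function.update x t a)| ≤ c := by
  have le := supDeviation_le_supDeviation_update_add w hf x t a
  have ge := supDeviation_le_supDeviation_update_add w hf (Function.update x t a) t (x t)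
  rw [Function.update_idem, Function.update_eq_self] at ge
  exact abs_le.mpr ⟨by linarith, by linarith⟩

end EmpiricalProcess

section NoncommutativeKhintchine

open scoped Matrix.Norms.L2Operator

variable {ι κ : Type*} [Fintype κ] [DecidableEq κ] {H W Y : Matrix κ κ ℝ}

lemma dotProduct_mulVec_le (A : Matrix κ κ ℝ) (x : κ → ℝ) : x ⬝ᵥ (A *ᵥ x) ≤ ‖A‖ * (x ⬝ᵥ x) := by
  set y : EuclideanSpace ℝ κ := WithLp.toLp 2 x
  have inner_eq : x ⬝ᵥ (A *ᵥ x) = inner ℝ y (toEuclideanCLM (n := κ) (𝕜 := ℝ) A y) := by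
    rw [inner_toEuclideanCLM]
  have norm_eq : x ⬝ᵥ x = ‖y‖ * ‖y‖ := by
    rw [← real_inner_self_eq_norm_mul_norm, EuclideanSpace.inner_eq_star_dotProduct, star_trivial]
  rw [inner_eq, norm_eq, ← l2_opNorm_toEuclideanCLM A]
  calc inner ℝ y (toEuclideanCLM (n := κ) (𝕜 := ℝ) A y)
      ≤ ‖y‖ * ‖toEuclideanCLM (n := κ) (𝕜 := ℝ) A y‖ := real_inner_le_norm _ _
    _ ≤ ‖y‖ * (‖toEuclideanCLM (n := κ) (𝕜 := ℝ) A‖ * ‖y‖) := by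
        gcongr
        exact ContinuousLinearMap.le_opNorm _ _
    _ = _ := by ring

lemma trace_mul_mul_conjTranspose_self_le (A Q : Matrix κ κ ℝ) :
    (A * (Q * Qᴴ)).trace ≤ ‖A‖ * (Q * Qᴴ).trace := by
  rw [← Matrix.mul_assoc, trace_mul_comm, trace_mul_comm Q, ← Matrix.mul_assoc, trace, trace,
    Finset.mul_sum]
  refine Finset.sum_le_sum fun j _ => ?_
  simpa only [diag_apply, Matrix.mul_assoc, mul_apply, mulVec, dotProduct, conjTranspose_apply,
    star_trivial] using dotProduct_mulVec_le A fun i => Q i j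

lemma pow_two_mul_eq_mul_conjTranspose (hW : W.IsHermitian) (k : ℕ) :
    W ^ (2 * k) = W ^ k * (W ^ k)ᴴ := by
  rw [(hW.pow k).eq, ← pow_add, two_mul]

lemma trace_mul_even_pow_le (A : Matrix κ κ ℝ) (hW : W.IsHermitian) (k : ℕ) :
    (A * W ^ (2 * k)).trace ≤ ‖A‖ * (W ^ (2 * k)).trace := by
  rw [pow_two_mul_eq_mul_conjTranspose hW]
  exact trace_mul_mul_conjTranspose_self_le A _

lemma trace_even_pow_nonneg (hW : W.IsHermitian) (k : ℕ) : 0 ≤ (W ^ (2 * k)).trace := by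
  rw [pow_two_mul_eq_mul_conjTranspose hW]
  exact (posSemidef_self_mul_conjTranspose _).trace_nonneg

lemma pow_eq_eigenvectorUnitary_conj (hW : W.IsHermitian) (k : ℕ) :
    W ^ k = (hW.eigenvectorUnitary : Matrix κ κ ℝ) * diagonal (hW.eigenvalues ^ k) *
      (hW.eigenvectorUnitary : Matrix κ κ ℝ)ᴴ := by
  conv_lhs => rw [hW.spectral_theorem]
  rw [← map_pow, diagonal_pow, Unitary.conjStarAlgAut_apply]
  rfl

lemma trace_pow_eq_sum_eigenvalues_pow (hW : W.IsHermitian) (k : ℕ) :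
    (W ^ k).trace = ∑ i, hW.eigenvalues i ^ k := by
  rw [pow_eq_eigenvectorUnitary_conj hW, trace_mul_cycle, ← star_eq_conjTranspose,
    Unitary.coe_star_mul_self, Matrix.one_mul, trace_diagonal]
  rfl

lemma norm_eq_norm_eigenvalues (hW : W.IsHermitian) : ‖W‖ = ‖hW.eigenvalues‖ := by
  conv_lhs => rw [← pow_one W]
  rw [pow_eq_eigenvectorUnitary_conj hW, ← star_eq_conjTranspose, ← Unitary.coe_star,
    CStarRing.norm_mul_coe_unitary, CStarRing.norm_coe_unitary_mul, l2_opNorm_diagonal, pow_one]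

lemma norm_pow_le_trace_even_pow [Nonempty κ] (hW : W.IsHermitian) (p : ℕ) :
    ‖W‖ ^ (2 * p) ≤ (W ^ (2 * p)).trace := by
  obtain ⟨i, hi⟩ := Finite.exists_max fun i => ‖hW.eigenvalues i‖
  have norm_le : ‖W‖ ≤ |hW.eigenvalues i| := by
    rw [norm_eq_norm_eigenvalues hW]
    exact (pi_norm_le_iff_of_nonneg (norm_nonneg _)).mpr hi
  calc ‖W‖ ^ (2 * p) ≤ |hW.eigenvalues i| ^ (2 * p) := by gcongr
    _ = hW.eigenvalues i ^ (2 * p) := (even_two_mul p).pow_abs _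
    _ ≤ ∑ j, hW.eigenvalues j ^ (2 * p) :=
        Finset.single_le_sum (f := fun j => hW.eigenvalues j ^ (2 * p))
          (fun j _ => (even_two_mul p).pow_nonneg _) (Finset.mem_univ i)
    _ = (W ^ (2 * p)).trace := (trace_pow_eq_sum_eigenvalues_pow hW _).symm

lemma trace_mul_conj_diagonal_mul_conj_diagonal (hH : H.IsHermitian) (P Q : Matrix κ κ ℝ)
    (x y : κ → ℝ) :
    (H * (P * diagonal x * Pᴴ) * H * (Q * diagonal y * Qᴴ)).trace =
      ∑ i, ∑ j, (Pᴴ * H * Q) i j ^ 2 * (x i * y j) := by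
  have cycle : (H * (P * diagonal x * Pᴴ) * H * (Q * diagonal y * Qᴴ)).trace =
      (diagonal x * (Pᴴ * H * Q) * (diagonal y * (Pᴴ * H * Q)ᴴ)).trace := by
    rw [show H * (P * diagonal x * Pᴴ) * H * (Q * diagonal y * Qᴴ) =
      (H * P) * (diagonal x * Pᴴ * H * Q * diagonal y * Qᴴ) by simp only [Matrix.mul_assoc],
      trace_mul_comm]
    simp only [conjTranspose_mul, conjTranspose_conjTranspose, hH.eq, Matrix.mul_assoc]
  rw [cycle, trace]
  refine Finset.sum_congr rfl fun i _ => ?_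
  rw [diag_apply, mul_apply]
  refine Finset.sum_congr rfl fun j _ => ?_
  rw [diagonal_mul, diagonal_mul, conjTranspose_apply, star_trivial]
  ring

lemma trace_mul_pow_mul_pow (hH : H.IsHermitian) (hW : W.IsHermitian) (hY : Y.IsHermitian)
    (q s : ℕ) :
    (H * W ^ q * H * Y ^ s).trace = ∑ i, ∑ j,
      ((hW.eigenvectorUnitary : Matrix κ κ ℝ)ᴴ * H * hY.eigenvectorUnitary) i j ^ 2 *
        (hW.eigenvalues i ^ q * hY.eigenvalues j ^ s) := by
  rw [pow_eq_eigenvectorUnitary_conj hW, pow_eq_eigenvectorUnitary_conj hY,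
    trace_mul_conj_diagonal_mul_conj_diagonal hH]
  rfl

lemma pow_mul_pow_add_pow_mul_pow_le {q s : ℕ} (hqs : Even (q + s)) (x y : ℝ) :
    x ^ q * y ^ s + x ^ s * y ^ q ≤ x ^ (q + s) + y ^ (q + s) := by
  suffices 0 ≤ (x ^ q - y ^ q) * (x ^ s - y ^ s) by
    rw [pow_add, pow_add]
    linarith
  rcases Nat.even_or_odd q with hq | hq
  · have hs : Even s := (Nat.even_add.mp hqs).mp hq
    rw [← hq.pow_abs x, ← hq.pow_abs y, ← hs.pow_abs x, ← hs.pow_abs y]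
    rcases le_total |x| |y| with h | h
    · exact mul_nonneg_of_nonpos_of_nonpos (sub_nonpos.mpr (by gcongr)) (sub_nonpos.mpr (by gcongr))
    · exact mul_nonneg (sub_nonneg.mpr (by gcongr)) (sub_nonneg.mpr (by gcongr))
  · have hs : Odd s := (Nat.even_add'.mp hqs).mp hq
    rcases le_total x y with h | h
    · exact mul_nonneg_of_nonpos_of_nonpos (sub_nonpos.mpr (hq.strictMono_pow.monotone h))
        (sub_nonpos.mpr (hs.strictMono_pow.monotone h))
    · exact mul_nonneg (sub_nonneg.mpr (hq.strictMono_pow.monotone h))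
        (sub_nonneg.mpr (hs.strictMono_pow.monotone h))

lemma trace_mul_pow_mul_pow_add_le (hH : H.IsHermitian) (hW : W.IsHermitian)
    (hY : Y.IsHermitian) {q s : ℕ} (hqs : Even (q + s)) :
    (H * W ^ q * H * Y ^ s).trace + (H * W ^ s * H * Y ^ q).trace ≤
      (H * H * W ^ (q + s)).trace + (H * H * Y ^ (q + s)).trace := by
  have eqW : (H * H * W ^ (q + s)).trace = (H * W ^ (q + s) * H * Y ^ 0).trace := by
    rw [pow_zero, Matrix.mul_one, trace_mul_cycle H (W ^ (q + s)) H]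
  have eqY : (H * H * Y ^ (q + s)).trace = (H * W ^ 0 * H * Y ^ (q + s)).trace := by
    rw [pow_zero, Matrix.mul_one]
  rw [eqW, eqY]
  simp only [trace_mul_pow_mul_pow hH hW hY, ← Finset.sum_add_distrib, ← mul_add]
  simp only [pow_zero, mul_one, one_mul]
  exact Finset.sum_le_sum fun i _ => Finset.sum_le_sum fun j _ =>
    mul_le_mul_of_nonneg_left (pow_mul_pow_add_pow_mul_pow_le hqs _ _) (sq_nonneg _)

lemma sum_antidiagonal_trace_mul_pow_mul_pow_le (hH : H.IsHermitian) (hW : W.IsHermitian)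
    (hY : Y.IsHermitian) {m : ℕ} (hm : Even m) :
    2 * ∑ q ∈ Finset.HasAntidiagonal.antidiagonal m, (H * W ^ q.1 * H * Y ^ q.2).trace ≤
      (m + 1) * ((H * H * W ^ m).trace + (H * H * Y ^ m).trace) := by
  rw [two_mul]
  nth_rw 2 [← Finset.Nat.sum_antidiagonal_swap]
  rw [← Finset.sum_add_distrib]
  calc _ ≤ ∑ _q ∈ Finset.HasAntidiagonal.antidiagonal m,
          ((H * H * W ^ m).trace + (H * H * Y ^ m).trace) := by
        refine Finset.sum_le_sum fun q hq => ?_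
        rw [← Finset.HasAntidiagonal.mem_antidiagonal.mp hq] at hm ⊢
        exact trace_mul_pow_mul_pow_add_le hH hW hY hm
    _ = _ := by
        rw [Finset.sum_const, Finset.Nat.card_antidiagonal, nsmul_eq_mul]
        push_cast
        rfl

lemma pow_succ_sub_pow_succ {R : Type*} [Ring R] (x y : R) (m : ℕ) :
    x ^ (m + 1) - y ^ (m + 1) =
      ∑ q ∈ Finset.HasAntidiagonal.antidiagonal m, x ^ q.1 * (x - y) * y ^ q.2 := by
  induction m with
  | zero => simp
  | succ m ih =>
    rw [Finset.Nat.sum_antidiagonal_succ']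
    simp only [pow_succ y, pow_zero, mul_one, ← mul_assoc, ← Finset.sum_mul]
    rw [← ih, pow_succ x (m + 1)]
    noncomm_ring

end NoncommutativeKhintchine

lemma expect_pow_le_expect_pow {ι : Type*} [Fintype ι] [Nonempty ι] {f : ι → ℝ}
    (hf : ∀ i, 0 ≤ f i) (k : ℕ) : (𝔼 i, f i) ^ k ≤ 𝔼 i, f i ^ k := by
  simpa only [Fintype.expect_eq_sum_div_card, div_eq_inv_mul, Finset.mul_sum] using
    Real.pow_arith_mean_le_arith_mean_pow Finset.univ
      (fun _ => (Fintype.card ι : ℝ)⁻¹) f (fun _ _ => by positivity)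
      (by simp) (fun i _ => hf i) k

section RademacherSum

open scoped Matrix.Norms.L2Operator

variable {ι κ : Type*} [Fintype ι]

/-- The signed sum of the vectors `H t`, with the units of `ℤ` as signs. -/
def rademacherSum {M : Type*} [AddCommGroup M] (H : ι → M) (e : ι → ℤˣ) : M :=
  ∑ t, e t • H t

lemma isHermitian_rademacherSum {H : ι → Matrix κ κ ℝ} (hH : ∀ t, (H t).IsHermitian)
    (e : ι → ℤˣ) : (rademacherSum H e).IsHermitian := by
  rw [IsHermitian, rademacherSum, conjTranspose_sum]
  refine Finset.sum_congr rfl fun t _ => ?_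
  rcases Int.units_eq_one_or (e t) with he | he
  · rw [he, one_smul, (hH t).eq]
  · rw [he, Units.neg_smul, one_smul, conjTranspose_neg, (hH t).eq]

variable [DecidableEq ι]

lemma rademacherSum_sub_rademacherSum_flip {M : Type*} [AddCommGroup M] (H : ι → M)
    (e : ι → ℤˣ) (t : ι) :
    rademacherSum H e - rademacherSum H (e * Pi.mulSingle t (-1)) = 2 • e t • H t := by
  rw [rademacherSum, rademacherSum, sum_mul_mulSingle_neg_one_smul,
    ← Finset.sum_erase_add _ _ (Finset.mem_univ t)]
  abel

variable [Fintype κ] [DecidableEq κ] {H : ι → Matrix κ κ ℝ}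

/-- The discrete analogue of Gaussian integration by parts. -/
lemma expect_smul_trace_mul_rademacherSum_pow (H : ι → Matrix κ κ ℝ) (t : ι) (m : ℕ) :
    𝔼 e : ι → ℤˣ, e t • (H t * rademacherSum H e ^ (m + 1)).trace =
      𝔼 e : ι → ℤˣ, ∑ q ∈ Finset.HasAntidiagonal.antidiagonal m, (H t * rademacherSum H e ^ q.1 *
        H t * rademacherSum H (e * Pi.mulSingle t (-1)) ^ q.2).trace := by
  refine mul_left_cancel₀ (two_ne_zero (α := ℝ)) ?_
  rw [two_mul_expect_signs _ t, Finset.mul_expect]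
  refine Finset.expect_congr rfl fun e _ => ?_
  rw [Pi.mul_apply, Pi.mulSingle_eq_same, mul_neg_one, Units.neg_smul, ← sub_eq_add_neg,
    ← smul_sub, ← trace_sub, ← Matrix.mul_sub, pow_succ_sub_pow_succ, Matrix.mul_sum, trace_sum,
    Finset.smul_sum, Finset.mul_sum]
  refine Finset.sum_congr rfl fun q _ => ?_
  simp only [rademacherSum_sub_rademacherSum_flip, mul_smul_comm, smul_mul_assoc, trace_smul,
    Matrix.mul_assoc]
  rw [smul_comm (e t), smul_smul, Int.units_mul_self, one_smul, nsmul_eq_mul, Nat.cast_ofNat]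

lemma expect_sum_antidiagonal_trace_le (hH : ∀ t, (H t).IsHermitian) (t : ι) {m : ℕ}
    (hm : Even m) :
    𝔼 e : ι → ℤˣ, ∑ q ∈ Finset.HasAntidiagonal.antidiagonal m, (H t * rademacherSum H e ^ q.1 *
        H t * rademacherSum H (e * Pi.mulSingle t (-1)) ^ q.2).trace ≤
      (m + 1) * 𝔼 e : ι → ℤˣ, (H t * H t * rademacherSum H e ^ m).trace := by
  refine le_of_mul_le_mul_left ?_ (two_pos (α := ℝ))
  rw [mul_left_comm, two_mul_expect_signs (fun e => (H t * H t * _ ^ m).trace) t,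
    Finset.mul_expect, Finset.mul_expect]
  exact Finset.expect_le_expect fun e _ => sum_antidiagonal_trace_mul_pow_mul_pow_le (hH t)
    (isHermitian_rademacherSum hH e) (isHermitian_rademacherSum hH _) hm

lemma expect_trace_rademacherSum_pow_add_two_le (hH : ∀ t, (H t).IsHermitian) {m : ℕ}
    (hm : Even m) :
    𝔼 e : ι → ℤˣ, (rademacherSum H e ^ (m + 2)).trace ≤
      (m + 1) * 𝔼 e : ι → ℤˣ, ((∑ t, H t * H t) * rademacherSum H e ^ m).trace := by
  have expand : ∀ e : ι → ℤˣ, (rademacherSum H e ^ (m + 2)).trace =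
      ∑ t, e t • (H t * rademacherSum H e ^ (m + 1)).trace := fun e => by
    rw [pow_succ']
    conv_lhs => enter [1, 1]; rw [rademacherSum]
    simp only [Matrix.sum_mul, trace_sum, smul_mul_assoc, trace_smul]
  simp only [expand, Matrix.sum_mul, trace_sum, Finset.expect_sum_comm, Finset.mul_sum]
  refine Finset.sum_le_sum fun t _ => ?_
  rw [expect_smul_trace_mul_rademacherSum_pow]
  exact expect_sum_antidiagonal_trace_le hH t hm

lemma expect_trace_rademacherSum_pow_le (hH : ∀ t, (H t).IsHermitian) {k p : ℕ} (hk : k ≤ p) :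
    𝔼 e : ι → ℤˣ, (rademacherSum H e ^ (2 * k)).trace ≤
      (2 * p * ‖∑ t, H t * H t‖) ^ k * Fintype.card κ := by
  induction k with
  | zero => simp
  | succ k ih =>
    have cast_le : (↑(2 * k) + 1 : ℝ) ≤ 2 * p := by
      have : ((k + 1 : ℕ) : ℝ) ≤ p := Nat.cast_le.mpr hk
      push_cast at this ⊢
      linarith
    have expect_nonneg : 0 ≤ 𝔼 e : ι → ℤˣ, (rademacherSum H e ^ (2 * k)).trace :=
      Finset.expect_nonneg fun e _ => trace_even_pow_nonneg (isHermitian_rademacherSum hH e) k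
    calc 𝔼 e : ι → ℤˣ, (rademacherSum H e ^ (2 * k + 2)).trace
        ≤ (↑(2 * k) + 1) * 𝔼 e : ι → ℤˣ,
            ((∑ t, H t * H t) * rademacherSum H e ^ (2 * k)).trace :=
          expect_trace_rademacherSum_pow_add_two_le hH (even_two_mul k)
      _ ≤ (↑(2 * k) + 1) *
            (‖∑ t, H t * H t‖ * 𝔼 e : ι → ℤˣ, (rademacherSum H e ^ (2 * k)).trace) := by
          refine mul_le_mul_of_nonneg_left ?_ (by positivity)
          rw [Finset.mul_expect]
          exact Finset.expect_le_expect fun e _ =>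
            trace_mul_even_pow_le _ (isHermitian_rademacherSum hH e) k
      _ ≤ (2 * p) * (‖∑ t, H t * H t‖ *
            ((2 * p * ‖∑ t, H t * H t‖) ^ k * Fintype.card κ)) := by
          gcongr
          exact ih (Nat.le_of_succ_le hk)
      _ = _ := by ring

lemma ceil_log_le {c : ℝ} (hc : 2 ≤ c) : (⌈Real.log c⌉₊ : ℝ) ≤ 5 / 2 * Real.log c := by
  have log_two_le : Real.log 2 ≤ Real.log c := Real.log_le_log two_pos hc
  have := Nat.ceil_lt_add_one (Real.log_nonneg (one_le_two.trans hc))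
  linarith [Real.log_two_gt_d9]

/-- The noncommutative Khintchine inequality, from the moment of order `2 ⌈log (card κ)⌉`. -/
theorem expect_norm_rademacherSum_le (hH : ∀ t, (H t).IsHermitian) (hκ : 2 ≤ Fintype.card κ) :
    𝔼 e : ι → ℤˣ, ‖rademacherSum H e‖ ≤
      √(14 * Real.log (Fintype.card κ) * ‖∑ t, H t * H t‖) := by
  have card_two_le : (2 : ℝ) ≤ Fintype.card κ := by exact_mod_cast hκ
  have : Nonempty κ := Fintype.card_pos_iff.mp (two_pos.trans_le hκ)
  set p := ⌈Real.log (Fintype.card κ)⌉₊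
  have log_pos : 0 < Real.log (Fintype.card κ) := Real.log_pos (by linarith)
  have card_le : (Fintype.card κ : ℝ) ≤ Real.exp 1 ^ p := by
    rw [← Real.exp_nat_mul, mul_one, ← Real.log_le_iff_le_exp (by linarith)]
    exact Nat.le_ceil _
  have moment : (𝔼 e : ι → ℤˣ, ‖rademacherSum H e‖) ^ (2 * p) ≤
      (2 * Real.exp 1 * p * ‖∑ t, H t * H t‖) ^ p :=
    calc _ ≤ 𝔼 e : ι → ℤˣ, ‖rademacherSum H e‖ ^ (2 * p) :=
          expect_pow_le_expect_pow (fun _ => norm_nonneg _) _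
      _ ≤ 𝔼 e : ι → ℤˣ, (rademacherSum H e ^ (2 * p)).trace :=
          Finset.expect_le_expect fun e _ =>
            norm_pow_le_trace_even_pow (isHermitian_rademacherSum hH e) p
      _ ≤ (2 * p * ‖∑ t, H t * H t‖) ^ p * Real.exp 1 ^ p :=
          (expect_trace_rademacherSum_pow_le hH le_rfl).trans (by gcongr)
      _ = _ := by rw [← mul_pow]; ring
  have hp0 : p ≠ 0 := (Nat.ceil_pos.mpr log_pos).ne'
  refine Real.le_sqrt_of_sq_le ?_
  calc _ ≤ 2 * Real.exp 1 * p * ‖∑ t, H t * H t‖ := by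
        rw [pow_mul] at moment
        exact le_of_pow_le_pow_left₀ hp0 (by positivity) moment
    _ ≤ 2 * (14 / 5) * (5 / 2 * Real.log (Fintype.card κ)) * ‖∑ t, H t * H t‖ := by
        gcongr
        · linarith [Real.exp_one_lt_d9]
        · exact ceil_log_le card_two_le
    _ = _ := by ring

end RademacherSum

section TraceNormDuality

open scoped Matrix.Norms.L2Operator

variable {m n : Type*} [Fintype m] [Fintype n]

lemma sum_sum_mul_eq_trace_mul_conjTranspose (A N : Matrix m n ℝ) :
    ∑ i, ∑ j, A i j * N i j = (A * Nᴴ).trace := by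
  simp only [trace, diag_apply, mul_apply, conjTranspose_apply, star_trivial]

lemma sum_sq_vecMul_le [DecidableEq n] (A : Matrix m n ℝ) (u : m → ℝ) :
    ∑ j, (u ᵥ* A) j ^ 2 ≤ ‖A‖ ^ 2 * ∑ i, u i ^ 2 := by
  classical
  have norm_le := l2_opNorm_mulVec Aᴴ (WithLp.toLp 2 u)
  rw [l2_opNorm_conjTranspose, ← sq_le_sq₀ (norm_nonneg _) (by positivity), mul_pow,
    EuclideanSpace.norm_sq_eq, EuclideanSpace.norm_sq_eq] at norm_le
  simpa [conjTranspose_eq_transpose_of_trivial, mulVec_transpose] using norm_le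

lemma traceNorm_nonneg {d1 d2 : ℕ} (N : Matrix (Fin d1) (Fin d2) ℝ) : 0 ≤ traceNorm N :=
  Finset.sum_nonneg fun _ _ => Real.sqrt_nonneg _

lemma sum_sum_mul_le_norm_mul_traceNorm {d1 d2 : ℕ} (A N : Matrix (Fin d1) (Fin d2) ℝ) :
    ∑ i, ∑ j, A i j * N i j ≤ ‖A‖ * traceNorm N := by
  have hN := isHermitian_mul_conjTranspose_self N
  set U : Matrix (Fin d1) (Fin d1) ℝ := hN.eigenvectorUnitary.val
  have unitary_left : Uᴴ * U = 1 := Unitary.coe_star_mul_self hN.eigenvectorUnitary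
  have unitary_right : U * Uᴴ = 1 := Unitary.coe_mul_star_self hN.eigenvectorUnitary
  have rotate : ∑ i, ∑ j, A i j * N i j = ∑ i, ∑ j, (Uᴴ * A) i j * (Uᴴ * N) i j := by
    rw [sum_sum_mul_eq_trace_mul_conjTranspose, sum_sum_mul_eq_trace_mul_conjTranspose,
      conjTranspose_mul, conjTranspose_conjTranspose, ← Matrix.mul_assoc, Matrix.mul_assoc Uᴴ,
      trace_mul_cycle, unitary_right, Matrix.one_mul]
  have gram : (Uᴴ * N) * (Uᴴ * N)ᴴ = diagonal hN.eigenvalues := by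
    rw [conjTranspose_mul, conjTranspose_conjTranspose, ← Matrix.mul_assoc, Matrix.mul_assoc Uᴴ]
    simpa only [Unitary.conjStarAlgAut_star_apply, RCLike.ofReal_real_eq_id, Function.id_comp,
      star_eq_conjTranspose] using hN.conjStarAlgAut_star_eigenvectorUnitary
  rw [rotate, traceNorm, Finset.mul_sum]
  refine Finset.sum_le_sum fun i _ => ?_
  have row_N : ∑ j, (Uᴴ * N) i j ^ 2 = hN.eigenvalues i := by
    have := congrFun (congrFun gram i) i
    rw [mul_apply, diagonal_apply_eq] at this
    simpa only [conjTranspose_apply (Uᴴ * N), star_trivial, ← sq] using this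
  have row_U : ∑ k, Uᴴ i k ^ 2 = 1 := by
    have := congrFun (congrFun unitary_left i) i
    simpa [mul_apply, ← sq] using this
  have row_A : ∑ j, (Uᴴ * A) i j ^ 2 ≤ ‖A‖ ^ 2 := by
    simpa only [row_U, mul_one, mul_apply_eq_vecMul] using sum_sq_vecMul_le A (Uᴴ i)
  calc ∑ j, (Uᴴ * A) i j * (Uᴴ * N) i j
      ≤ √(∑ j, (Uᴴ * A) i j ^ 2) * √(∑ j, (Uᴴ * N) i j ^ 2) :=
        Real.sum_mul_le_sqrt_mul_sqrt _ _ _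
    _ ≤ ‖A‖ * √(hN.eigenvalues i) := by
        rw [row_N]
        gcongr
        exact Real.sqrt_le_iff.mpr ⟨norm_nonneg _, row_A⟩

end TraceNormDuality

section Dilation

open scoped Matrix.Norms.L2Operator

variable {m n : Type*}

/-- The self-adjoint dilation of a rectangular matrix. -/
def dilation (B : Matrix m n ℝ) : Matrix (m ⊕ n) (m ⊕ n) ℝ := fromBlocks 0 B Bᴴ 0

lemma isHermitian_dilation (B : Matrix m n ℝ) : (dilation B).IsHermitian :=
  isHermitian_zero.fromBlocks rfl isHermitian_zero

lemma rademacherSum_dilation {ι : Type*} [Fintype ι] (B : ι → Matrix m n ℝ) (e : ι → ℤˣ) :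
    rademacherSum (fun t => dilation (B t)) e = dilation (rademacherSum B e) := by
  ext (i | i) (j | j) <;> simp [rademacherSum, dilation, Matrix.sum_apply]

/-- The diagonal of `dilation (single i j c) ^ 2`, where `s = (i, j)` and `c = a i j`. -/
def leverage [DecidableEq m] [DecidableEq n] (a : m → n → ℝ) (s : m × n) : m ⊕ n → ℝ :=
  Sum.elim (Pi.single s.1 (a s.1 s.2 ^ 2)) (Pi.single s.2 (a s.1 s.2 ^ 2))

variable [DecidableEq m] [DecidableEq n]

lemma leverage_nonneg (a : m → n → ℝ) (s : m × n) (k : m ⊕ n) :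
    0 ≤ leverage a s k := by
  rcases k with i | j <;> simp only [leverage, Sum.elim_inl, Sum.elim_inr, Pi.single_apply] <;>
    split_ifs <;> positivity

lemma leverage_le {a : m → n → ℝ} {R : ℝ} (ha : ∀ i j, a i j ^ 2 ≤ R) (s : m × n) (k : m ⊕ n) :
    leverage a s k ≤ R := by
  have hR : 0 ≤ R := (sq_nonneg _).trans (ha s.1 s.2)
  rcases k with i | j <;> simp only [leverage, Sum.elim_inl, Sum.elim_inr, Pi.single_apply] <;>
    split_ifs <;> simp only [ha, hR]

variable [Fintype m] [Fintype n]

lemma norm_le_norm_dilation (B : Matrix m n ℝ) : ‖B‖ ≤ ‖dilation B‖ := by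
  rw [l2_opNorm_def]
  refine ContinuousLinearMap.opNorm_le_bound _ (norm_nonneg _) fun x => ?_
  have := l2_opNorm_mulVec (dilation B) (WithLp.toLp 2 (Sum.elim 0 x))
  simpa [dilation, fromBlocks_mulVec, EuclideanSpace.norm_eq] using this

lemma dilation_single_mul_self (a : m → n → ℝ) (s : m × n) :
    dilation (single s.1 s.2 (a s.1 s.2)) * dilation (single s.1 s.2 (a s.1 s.2)) =
      diagonal (leverage a s) := by
  rw [dilation, fromBlocks_multiply, leverage, ← fromBlocks_diagonal, diagonal_single,
    diagonal_single]
  simp [sq]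

lemma norm_sum_dilation_single_mul_self {ι : Type*} [Fintype ι] (a : m → n → ℝ)
    (S : ι → m × n) :
    ‖∑ t, dilation (single (S t).1 (S t).2 (a (S t).1 (S t).2)) *
        dilation (single (S t).1 (S t).2 (a (S t).1 (S t).2))‖ ≤
      ⨆ k, ∑ t, leverage a (S t) k := by
  have nonneg : ∀ k, 0 ≤ ∑ t, leverage a (S t) k := fun k =>
    Finset.sum_nonneg fun t _ => leverage_nonneg a (S t) k
  have sum_diagonal : ∑ t, diagonal (leverage a (S t)) = diagonal (∑ t, leverage a (S t)) :=
    (map_sum (diagonalAddMonoidHom (m ⊕ n) ℝ) _ _).symm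
  simp only [dilation_single_mul_self]
  rw [sum_diagonal, l2_opNorm_diagonal]
  refine (pi_norm_le_iff_of_nonneg (Real.iSup_nonneg nonneg)).mpr fun k => ?_
  rw [Finset.sum_apply, Real.norm_of_nonneg (nonneg k)]
  exact Finite.le_ciSup (fun k => ∑ t, leverage a (S t) k) k

lemma sum_smul_mul_eq_sum_rademacherSum_single_mul {ι : Type*} [Fintype ι] (a : m → n → ℝ)
    (S : ι → m × n) (N : Matrix m n ℝ) (e : ι → ℤˣ) :
    ∑ t, e t • (a (S t).1 (S t).2 * N (S t).1 (S t).2) =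
      ∑ i, ∑ j, rademacherSum (fun t => single (S t).1 (S t).2 (a (S t).1 (S t).2)) e i j *
        N i j := by
  rw [sum_sum_mul_eq_trace_mul_conjTranspose, rademacherSum, Matrix.sum_mul, trace_sum]
  simp only [Matrix.smul_mul, trace_smul, trace_single_mul, smul_eq_mul,
    conjTranspose_apply, star_trivial]

lemma rademacherComplexity_le_of_traceNorm_le {ι T : Type*} [Fintype ι] [DecidableEq ι]
    [Nonempty T] {d1 d2 : ℕ} (h1 : 1 ≤ d1) (h2 : 1 ≤ d2) (a : Fin d1 → Fin d2 → ℝ)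
    (S : ι → Fin d1 × Fin d2) {N : T → Matrix (Fin d1) (Fin d2) ℝ} {B : ℝ}
    (hN : ∀ τ, traceNorm (N τ) ≤ B) :
    rademacherComplexity (fun τ t => a (S t).1 (S t).2 * N τ (S t).1 (S t).2) ≤
      B * √(14 * Real.log (d1 + d2) * ⨆ k, ∑ t, leverage a (S t) k) := by
  set E : ι → Matrix (Fin d1) (Fin d2) ℝ :=
    fun t => single (S t).1 (S t).2 (a (S t).1 (S t).2)
  have hB : 0 ≤ B := ‹Nonempty T›.elim fun τ => (traceNorm_nonneg _).trans (hN τ)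
  have card_eq : (Fintype.card (Fin d1 ⊕ Fin d2) : ℝ) = d1 + d2 := by simp
  have log_nonneg : 0 ≤ Real.log (d1 + d2) := by
    rw [← card_eq]
    exact Real.log_natCast_nonneg _
  calc rademacherComplexity (fun τ t => a (S t).1 (S t).2 * N τ (S t).1 (S t).2)
      ≤ 𝔼 e : ι → ℤˣ, B * ‖rademacherSum (fun t => dilation (E t)) e‖ := by
        refine Finset.expect_le_expect fun e _ => ciSup_le fun τ => ?_
        rw [sum_smul_mul_eq_sum_rademacherSum_single_mul, rademacherSum_dilation, mul_comm B]
        exact (sum_sum_mul_le_norm_mul_traceNorm _ _).trans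
          (mul_le_mul (norm_le_norm_dilation _) (hN τ) (traceNorm_nonneg _) (norm_nonneg _))
    _ ≤ B * √(14 * Real.log (d1 + d2) * ‖∑ t, dilation (E t) * dilation (E t)‖) := by
        rw [← Finset.mul_expect, ← card_eq]
        gcongr
        refine expect_norm_rademacherSum_le (fun t => isHermitian_dilation _) ?_
        rw [Fintype.card_sum, Fintype.card_fin, Fintype.card_fin]
        exact Nat.add_le_add h1 h2
    _ ≤ _ := by
        gcongr
        exact norm_sum_dilation_single_mul_self a S

end Dilation

section MaximalInequality

variable {Ω κ ι : Type*} [Fintype Ω] [Fintype κ] [Nonempty κ] [Fintype ι] [DecidableEq ι]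
  {w : Ω → ℝ} {m : ℝ}

lemma expectation_exp_le (hw : w ∈ stdSimplex ℝ Ω) {q : Ω → ℝ} (hq0 : ∀ a, 0 ≤ q a)
    (hq1 : ∀ a, q a ≤ 1) (hm : expectation w q ≤ m) :
    expectation w (fun a => Real.exp (q a)) ≤ Real.exp (2 * m) := by
  have exp_le : ∀ a, Real.exp (q a) ≤ 1 + 2 * q a := fun a => by
    have remainder := Real.abs_exp_sub_one_sub_id_le (x := q a)
      (by rw [abs_of_nonneg (hq0 a)]; exact hq1 a)
    nlinarith [le_of_abs_le remainder, hq0 a, hq1 a]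
  calc expectation w (fun a => Real.exp (q a))
      ≤ expectation w (fun a => 1 + 2 * q a) := expectation_mono hw.1 exp_le
    _ = 2 * expectation w q + 1 := by
        rw [expectation_add, expectation_const hw, expectation_const_mul, add_comm]
    _ ≤ 2 * m + 1 := by gcongr
    _ ≤ Real.exp (2 * m) := Real.add_one_le_exp _

lemma expectation_iSup_sum_le_of_le_one (hw : w ∈ stdSimplex ℝ Ω) {q : κ → Ω → ℝ}
    (hq0 : ∀ k a, 0 ≤ q k a) (hq1 : ∀ k a, q k a ≤ 1) (hm : ∀ k, expectation w (q k) ≤ m) :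
    expectation (productWeight w) (fun x : ι → Ω => ⨆ k, ∑ t, q k (x t)) ≤
      Real.log (Fintype.card κ) + 2 * Fintype.card ι * m := by
  have hw' : productWeight w ∈ stdSimplex ℝ (ι → Ω) := productWeight_mem_stdSimplex hw
  have exp_iSup_le : ∀ x : ι → Ω, Real.exp (⨆ k, ∑ t, q k (x t)) ≤
      ∑ k, ∏ t, Real.exp (q k (x t)) := fun x => by
    obtain ⟨k, hk⟩ := exists_eq_ciSup_of_finite (f := fun k => ∑ t, q k (x t))
    rw [← hk, Real.exp_sum]
    exact Finset.single_le_sum (f := fun k => ∏ t, Real.exp (q k (x t)))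
      (fun _ _ => Finset.prod_nonneg fun _ _ => Real.exp_nonneg _) (Finset.mem_univ k)
  have prod_le : ∀ k, ∏ _t : ι, expectation w (fun a => Real.exp (q k a)) ≤
      Real.exp (2 * Fintype.card ι * m) := fun k => by
    rw [Finset.prod_const, Finset.card_univ, mul_right_comm, mul_comm, Real.exp_nat_mul]
    exact pow_le_pow_left₀ (Finset.sum_nonneg fun a _ => mul_nonneg (hw.1 a) (Real.exp_nonneg _))
      (expectation_exp_le hw (hq0 k) (hq1 k) (hm k)) _
  have card_pos : (0 : ℝ) < Fintype.card κ := Nat.cast_pos.mpr Fintype.card_pos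
  rw [← Real.exp_le_exp, Real.exp_add, Real.exp_log card_pos]
  calc Real.exp (expectation (productWeight w) fun x : ι → Ω => ⨆ k, ∑ t, q k (x t))
      ≤ expectation (productWeight w) fun x : ι → Ω => Real.exp (⨆ k, ∑ t, q k (x t)) :=
        exp_expectation_le hw' _
    _ ≤ expectation (productWeight w) fun x : ι → Ω => ∑ k, ∏ t, Real.exp (q k (x t)) :=
        expectation_mono hw'.1 exp_iSup_le
    _ = ∑ k, ∏ _t : ι, expectation w (fun a => Real.exp (q k a)) := by
        rw [expectation_sum]
        exact Finset.sum_congr rfl fun k _ =>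
          expectation_productWeight_prod w fun _ a => Real.exp (q k a)
    _ ≤ ∑ _k : κ, Real.exp (2 * Fintype.card ι * m) := Finset.sum_le_sum fun k _ => prod_le k
    _ = Fintype.card κ * Real.exp (2 * Fintype.card ι * m) := by
        rw [Finset.sum_const, nsmul_eq_mul, Finset.card_univ]

lemma expectation_iSup_sum_le (hw : w ∈ stdSimplex ℝ Ω) {R : ℝ} (hR : 0 < R) {q : κ → Ω → ℝ}
    (hq0 : ∀ k a, 0 ≤ q k a) (hqR : ∀ k a, q k a ≤ R) (hm : ∀ k, expectation w (q k) ≤ m) :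
    expectation (productWeight w) (fun x : ι → Ω => ⨆ k, ∑ t, q k (x t)) ≤
      R * Real.log (Fintype.card κ) + 2 * Fintype.card ι * m := by
  have normalized := expectation_iSup_sum_le_of_le_one (ι := ι) (m := R⁻¹ * m) hw
    (q := fun k a => R⁻¹ * q k a) (fun k a => mul_nonneg (inv_nonneg.mpr hR.le) (hq0 k a))
    (fun k a => inv_mul_le_one_of_le₀ (hqR k a) hR.le) fun k => by
      rw [expectation_const_mul]
      exact mul_le_mul_of_nonneg_left (hm k) (inv_nonneg.mpr hR.le)
  simp only [← Finset.mul_sum, ← Real.mul_iSup_of_nonneg (inv_nonneg.mpr hR.le),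
    expectation_const_mul] at normalized
  calc expectation (productWeight w) (fun x : ι → Ω => ⨆ k, ∑ t, q k (x t))
      ≤ R * (Real.log (Fintype.card κ) + 2 * Fintype.card ι * (R⁻¹ * m)) :=
        (inv_mul_le_iff₀ hR).mp normalized
    _ = R * Real.log (Fintype.card κ) + 2 * Fintype.card ι * m := by field_simp

end MaximalInequality

section Marginals

lemma inv_sum_le {ι : Type*} [Fintype ι] [Nonempty ι] {p : ι → ℝ} {c : ℝ} (hc : 0 < c)
    (hp : ∀ i, 1 / (c * Fintype.card ι) ≤ p i) : (∑ i, p i)⁻¹ ≤ c := by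
  have : (0 : ℝ) < Fintype.card ι := Nat.cast_pos.mpr Fintype.card_pos
  refine inv_le_of_inv_le₀ hc ?_
  calc c⁻¹ = ∑ _i : ι, 1 / (c * Fintype.card ι) := by
        rw [Finset.sum_const, nsmul_eq_mul, Finset.card_univ]
        field_simp
    _ ≤ ∑ i, p i := Finset.sum_le_sum fun i _ => hp i

lemma sum_mul_inv_sum_mul_le {ι : Type*} [Fintype ι] {p q : ι → ℝ} {c : ℝ} (hc : 0 ≤ c)
    (hp : ∀ i, 0 ≤ p i) (hq : ∀ i, q i ≤ c) : ∑ i, p i * ((∑ j, p j)⁻¹ * q i) ≤ c := by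
  have sum_nonneg : 0 ≤ ∑ j, p j := Finset.sum_nonneg fun j _ => hp j
  calc ∑ i, p i * ((∑ j, p j)⁻¹ * q i)
      ≤ ∑ i, p i * ((∑ j, p j)⁻¹ * c) := by
        gcongr with i
        exacts [hp i, hq i]
    _ = (∑ j, p j) * (∑ j, p j)⁻¹ * c := by rw [← Finset.sum_mul, mul_assoc]
    _ ≤ c := mul_le_of_le_one_left hc mul_inv_le_one

variable {d1 d2 : ℕ} {π : Fin d1 → Fin d2 → ℝ} {μ : ℝ}

/-- The entrywise factor `(√π_{k·} √π_{·l})⁻¹` that undoes the scaling by the marginals in the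
weighted trace-norm. -/
noncomputable def marginalScale (π : Fin d1 → Fin d2 → ℝ) (k : Fin d1) (l : Fin d2) : ℝ :=
  (√(∑ l', π k l') * √(∑ k', π k' l))⁻¹

lemma marginalScale_sq (hπ : ∀ k l, 0 ≤ π k l) (k : Fin d1) (l : Fin d2) :
    marginalScale π k l ^ 2 = (∑ l', π k l')⁻¹ * (∑ k', π k' l)⁻¹ := by
  rw [marginalScale, inv_pow, mul_pow, Real.sq_sqrt (Finset.sum_nonneg fun l' _ => hπ k l'),
    Real.sq_sqrt (Finset.sum_nonneg fun k' _ => hπ k' l), mul_inv]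

lemma inv_row_sum_le (hμ : 0 < μ) (hπ : ∀ k l, 1 / (μ * d1 * d2) ≤ π k l) (k : Fin d1)
    (l : Fin d2) : (∑ l', π k l')⁻¹ ≤ μ * d1 := by
  have : NeZero d1 := ⟨(Fin.pos k).ne'⟩
  have : NeZero d2 := ⟨(Fin.pos l).ne'⟩
  refine inv_sum_le (mul_pos hμ (Nat.cast_pos.mpr (Fin.pos k))) fun l' => ?_
  simpa only [Fintype.card_fin] using hπ k l'

lemma inv_col_sum_le (hμ : 0 < μ) (hπ : ∀ k l, 1 / (μ * d1 * d2) ≤ π k l) (k : Fin d1)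
    (l : Fin d2) : (∑ k', π k' l)⁻¹ ≤ μ * d2 :=
  inv_row_sum_le (π := fun l k => π k l) hμ (fun l k => by rw [mul_right_comm]; exact hπ k l) l k

lemma marginalScale_sq_le (hμ : 0 < μ) (hπ : ∀ k l, 1 / (μ * d1 * d2) ≤ π k l) (k : Fin d1)
    (l : Fin d2) : marginalScale π k l ^ 2 ≤ μ ^ 2 * (d1 * d2) := by
  have hπ0 : ∀ k l, 0 ≤ π k l := fun k l => le_trans (by positivity) (hπ k l)
  rw [marginalScale_sq hπ0]
  calc (∑ l', π k l')⁻¹ * (∑ k', π k' l)⁻¹ ≤ (μ * d1) * (μ * d2) :=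
        mul_le_mul (inv_row_sum_le hμ hπ k l) (inv_col_sum_le hμ hπ k l)
          (inv_nonneg.mpr (Finset.sum_nonneg fun k' _ => hπ0 k' l)) (by positivity)
    _ = μ ^ 2 * (d1 * d2) := by ring

lemma sum_mul_leverage_marginalScale_le (hμ : 0 < μ) (hπ : ∀ k l, 1 / (μ * d1 * d2) ≤ π k l)
    (i : Fin d1 ⊕ Fin d2) :
    ∑ k, ∑ l, π k l * leverage (marginalScale π) (k, l) i ≤ μ * (d1 + d2) := by
  have hπ0 : ∀ k l, 0 ≤ π k l := fun k l => le_trans (by positivity) (hπ k l)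
  rcases i with k | l
  · rw [Fintype.sum_eq_single k fun k' hk' => by simp [leverage, hk'.symm]]
    simp only [leverage, Sum.elim_inl, Pi.single_eq_same, marginalScale_sq hπ0]
    have := sum_mul_inv_sum_mul_le (by positivity : 0 ≤ μ * d2) (hπ0 k)
      (inv_col_sum_le hμ hπ k)
    nlinarith [mul_nonneg hμ.le (Nat.cast_nonneg (α := ℝ) d1)]
  · rw [Finset.sum_comm, Fintype.sum_eq_single l fun l' hl' => by simp [leverage, hl'.symm]]
    simp only [leverage, Sum.elim_inr, Pi.single_eq_same, marginalScale_sq hπ0,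
      mul_comm (∑ l', π _ l')⁻¹]
    have := sum_mul_inv_sum_mul_le (by positivity : 0 ≤ μ * d1) (fun k => hπ0 k l)
      fun k => inv_row_sum_le hμ hπ k l
    nlinarith [mul_nonneg hμ.le (Nat.cast_nonneg (α := ℝ) d2)]

end Marginals

section BernoulliKL

variable {p q : ℝ}

/-- The Kullback–Leibler divergence of the Bernoulli law with mean `q` from the one with
mean `p`. -/
noncomputable def bernoulliKL (p q : ℝ) : ℝ :=
  p * Real.log (p / q) + (1 - p) * Real.log ((1 - p) / (1 - q))

lemma two_mul_sub_sqrt_mul_sqrt_le_mul_log_div (hp : 0 < p) (hq : 0 < q) :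
    2 * (p - √p * √q) ≤ p * Real.log (p / q) := by
  have log_le := Real.log_le_sub_one_of_pos (div_pos (Real.sqrt_pos.mpr hq) (Real.sqrt_pos.mpr hp))
  have mul_sqrt_div : p * (√q / √p) = √p * √q := by
    nth_rewrite 1 [← Real.mul_self_sqrt hp.le]
    field_simp
  rw [Real.log_div (Real.sqrt_pos.mpr hq).ne' (Real.sqrt_pos.mpr hp).ne', Real.log_sqrt hq.le,
    Real.log_sqrt hp.le] at log_le
  rw [Real.log_div hp.ne' hq.ne']
  nlinarith [mul_le_mul_of_nonneg_left log_le hp.le]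

lemma cos_arcsin_sqrt_sub_arcsin_sqrt (hp : p ∈ Set.Icc 0 1) (hq : q ∈ Set.Icc 0 1) :
    Real.cos (Real.arcsin √p - Real.arcsin √q) = √p * √q + √(1 - p) * √(1 - q) := by
  have neg_one_le_sqrt : ∀ x : ℝ, -1 ≤ √x := fun x => by linarith [Real.sqrt_nonneg x]
  rw [Real.cos_sub, Real.cos_arcsin, Real.cos_arcsin,
    Real.sin_arcsin (neg_one_le_sqrt p) (Real.sqrt_le_one.mpr hp.2),
    Real.sin_arcsin (neg_one_le_sqrt q) (Real.sqrt_le_one.mpr hq.2), Real.sq_sqrt hp.1,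
    Real.sq_sqrt hq.1, add_comm]

/-- The squared Hellinger distance is `2 (1 - cos θ)` for the angle `θ = arcsin √p - arcsin √q`. -/
lemma sq_arcsin_sqrt_sub_arcsin_sqrt_le (hp : p ∈ Set.Ioo 0 1) (hq : q ∈ Set.Ioo 0 1) :
    4 * (Real.arcsin √p - Real.arcsin √q) ^ 2 ≤ Real.pi ^ 2 * bernoulliKL p q := by
  have hellinger_le : 2 * (1 - Real.cos (Real.arcsin √p - Real.arcsin √q)) ≤ bernoulliKL p q := by
    have success := two_mul_sub_sqrt_mul_sqrt_le_mul_log_div hp.1 hq.1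
    have failure := two_mul_sub_sqrt_mul_sqrt_le_mul_log_div (sub_pos.mpr hp.2) (sub_pos.mpr hq.2)
    rw [cos_arcsin_sqrt_sub_arcsin_sqrt ⟨hp.1.le, hp.2.le⟩ ⟨hq.1.le, hq.2.le⟩, bernoulliKL]
    linarith
  have cos_le : Real.cos (Real.arcsin √p - Real.arcsin √q) ≤
      1 - 2 / Real.pi ^ 2 * (Real.arcsin √p - Real.arcsin √q) ^ 2 := by
    have range : ∀ x : ℝ, Real.arcsin √x ∈ Set.Icc 0 (Real.pi / 2) := fun x =>
      ⟨Real.arcsin_nonneg.mpr (Real.sqrt_nonneg x), Real.arcsin_le_pi_div_two _⟩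
    refine Real.cos_le_one_sub_mul_cos_sq ((abs_sub_le_of_le_of_le (range p).1 (range p).2
      (range q).1 (range q).2).trans ?_)
    linarith [Real.pi_pos]
  calc 4 * (Real.arcsin √p - Real.arcsin √q) ^ 2
      = Real.pi ^ 2 * (2 * (2 / Real.pi ^ 2 * (Real.arcsin √p - Real.arcsin √q) ^ 2)) := by
        field_simp
        ring
    _ ≤ Real.pi ^ 2 * bernoulliKL p q := by
        gcongr
        linarith

lemma sq_sub_le_mul_sq_sub_of_hasDerivAt {G G' : ℝ → ℝ} {a b c : ℝ}
    (hG : ∀ x ∈ Set.uIcc a b, HasDerivAt G (G' x) x)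
    (hc : ∀ x ∈ Set.uIcc a b, 1 ≤ c * G' x ^ 2) : (a - b) ^ 2 ≤ c * (G a - G b) ^ 2 := by
  wlog hab : a < b generalizing a b
  · rcases eq_or_lt_of_le (not_lt.mp hab) with rfl | hba
    · simp
    · rw [← neg_sub b, ← neg_sub (G b), neg_sq, neg_sq]
      rw [Set.uIcc_comm] at hG hc
      exact this hG hc hba
  rw [Set.uIcc_of_lt hab] at hG hc
  obtain ⟨x, hx, slope⟩ := exists_hasDerivAt_eq_slope G G' hab
    (fun x hx => (hG x hx).continuousAt.continuousWithinAt)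
    fun x hx => hG x (Set.Ioo_subset_Icc_self hx)
  rw [eq_div_iff (sub_pos.mpr hab).ne'] at slope
  calc (a - b) ^ 2 ≤ c * G' x ^ 2 * (a - b) ^ 2 :=
        le_mul_of_one_le_left (sq_nonneg _) (hc x (Set.Ioo_subset_Icc_self hx))
    _ = c * (G' x * (b - a)) ^ 2 := by ring
    _ = c * (G a - G b) ^ 2 := by rw [slope]; ring

end BernoulliKL

section BinaryResponse

variable {F : ℝ → ℝ} {s : Set ℝ} {x a b : ℝ}

lemma hasDerivAt_arcsin_sqrt (hF : DifferentiableAt ℝ F x) (hx : F x ∈ Set.Ioo 0 1) :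
    HasDerivAt (fun x => Real.arcsin √(F x)) (deriv F x / (2 * √(F x * (1 - F x)))) x := by
  have sqrt_pos : 0 < √(F x) := Real.sqrt_pos.mpr hx.1
  have sqrt_lt_one : √(F x) < 1 := (Real.sqrt_lt' one_pos).mpr (by rw [one_pow]; exact hx.2)
  refine ((Real.hasDerivAt_arcsin (by linarith) sqrt_lt_one.ne).comp x
    (hF.hasDerivAt.sqrt hx.1.ne')).congr_deriv ?_
  rw [Real.sq_sqrt hx.1.le, Real.sqrt_mul hx.1.le, one_div_mul_eq_div, div_div, mul_assoc]

lemma sq_sub_le_mul_bernoulliKL (hs : s.OrdConnected) (hF : ∀ x ∈ s, DifferentiableAt ℝ F x)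
    (h01 : ∀ x ∈ s, F x ∈ Set.Ioo 0 1) (hF' : ∀ x ∈ s, deriv F x ≠ 0) {β : ℝ}
    (hβ : ∀ x ∈ s, F x * (1 - F x) / deriv F x ^ 2 ≤ β) (ha : a ∈ s) (hb : b ∈ s) :
    (a - b) ^ 2 ≤ 10 * β * bernoulliKL (F a) (F b) := by
  have hab : Set.uIcc a b ⊆ s := hs.uIcc_subset ha hb
  have variance_pos : ∀ x ∈ s, 0 < F x * (1 - F x) := fun x hx =>
    mul_pos (h01 x hx).1 (sub_pos.mpr (h01 x hx).2)
  have hβ0 : 0 ≤ β := (div_nonneg (variance_pos a ha).le (sq_nonneg _)).trans (hβ a ha)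
  have angle_le := sq_arcsin_sqrt_sub_arcsin_sqrt_le (h01 a ha) (h01 b hb)
  have kl_nonneg : 0 ≤ bernoulliKL (F a) (F b) :=
    (mul_nonneg_iff_of_pos_left (pow_pos Real.pi_pos 2)).mp ((by positivity : (0 : ℝ) ≤ _).trans
      angle_le)
  have pi_sq_le : Real.pi ^ 2 ≤ 10 := by nlinarith [Real.pi_lt_d2, Real.pi_pos]
  calc (a - b) ^ 2 ≤ 4 * β * (Real.arcsin √(F a) - Real.arcsin √(F b)) ^ 2 := by
        refine sq_sub_le_mul_sq_sub_of_hasDerivAt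
          (fun x hx => hasDerivAt_arcsin_sqrt (hF x (hab hx)) (h01 x (hab hx))) fun x hx => ?_
        have := (div_le_iff₀ (sq_pos_of_ne_zero (hF' x (hab hx)))).mp (hβ x (hab hx))
        rw [div_pow, mul_pow, Real.sq_sqrt (variance_pos x (hab hx)).le, mul_div_assoc',
          le_div_iff₀ (by linarith [variance_pos x (hab hx)])]
        linarith
    _ = β * (4 * (Real.arcsin √(F a) - Real.arcsin √(F b)) ^ 2) := by ring
    _ ≤ β * (10 * bernoulliKL (F a) (F b)) := by
        refine mul_le_mul_of_nonneg_left (angle_le.trans ?_) hβ0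
        gcongr
    _ = 10 * β * bernoulliKL (F a) (F b) := by ring

/-- The negative log-likelihood of the single sign `y` when `F x` is the probability of `true`. -/
noncomputable def logLoss (F : ℝ → ℝ) (y : Bool) (x : ℝ) : ℝ :=
  if y then Real.log (1 / F x) else Real.log (1 / (1 - F x))

lemma logLoss_nonneg (hx : F x ∈ Set.Ioo 0 1) (y : Bool) : 0 ≤ logLoss F y x := by
  have hx' : 0 < 1 - F x := sub_pos.mpr hx.2
  cases y
  · exact Real.log_nonneg (one_le_one_div hx' (by linarith [hx.1]))
  · exact Real.log_nonneg (one_le_one_div hx.1 hx.2.le)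

lemma logLoss_true_add_logLoss_false (hx : F x ∈ Set.Ioo 0 1) :
    logLoss F true x + logLoss F false x = Real.log (1 / (F x * (1 - F x))) := by
  simp only [logLoss, if_true, Bool.false_eq_true, if_false, one_div, Real.log_inv,
    Real.log_mul hx.1.ne' (sub_pos.mpr hx.2).ne', neg_add]

lemma logLoss_le {U : ℝ} (hx : F x ∈ Set.Ioo 0 1)
    (hU : Real.log (1 / (F x * (1 - F x))) ≤ U) (y : Bool) : logLoss F y x ≤ U := by
  rw [← logLoss_true_add_logLoss_false hx] at hU
  cases y <;> linarith [logLoss_nonneg hx true, logLoss_nonneg hx false]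

lemma hasDerivAt_logLoss (hF : DifferentiableAt ℝ F x) (hx : F x ∈ Set.Ioo 0 1) (y : Bool) :
    HasDerivAt (logLoss F y) (if y then -(deriv F x / F x) else deriv F x / (1 - F x)) x := by
  unfold logLoss
  cases y <;> simp only [Bool.false_eq_true, if_false, if_true, one_div, Real.log_inv]
  · refine ((hF.hasDerivAt.const_sub 1).log (sub_pos.mpr hx.2).ne').neg.congr_deriv ?_
    rw [neg_div, neg_neg]
  · exact (hF.hasDerivAt.log hx.1.ne').neg

lemma abs_logLoss_sub_logLoss_le (hs : Convex ℝ s) (hF : ∀ x ∈ s, DifferentiableAt ℝ F x)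
    (h01 : ∀ x ∈ s, F x ∈ Set.Ioo 0 1) {L : ℝ}
    (hL : ∀ x ∈ s, |deriv F x| / (F x * (1 - F x)) ≤ L) (y : Bool) (ha : a ∈ s) (hb : b ∈ s) :
    |logLoss F y a - logLoss F y b| ≤ L * |a - b| := by
  refine hs.norm_image_sub_le_of_norm_hasDerivWithin_le
    (fun x hx => (hasDerivAt_logLoss (hF x hx) (h01 x hx) y).hasDerivWithinAt)
    (fun x hx => le_trans ?_ (hL x hx)) hb ha
  obtain ⟨pos, lt_one⟩ := h01 x hx
  have one_sub_pos := sub_pos.mpr lt_one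
  have := mul_pos pos one_sub_pos
  cases y <;> simp only [Bool.false_eq_true, if_false, if_true, norm_neg, norm_div,
    Real.norm_eq_abs, abs_of_pos pos, abs_of_pos one_sub_pos] <;> gcongr <;> nlinarith

lemma mul_logLoss_sub_add_mul_logLoss_sub (ha : F a ∈ Set.Ioo 0 1) (hb : F b ∈ Set.Ioo 0 1) :
    F a * (logLoss F true b - logLoss F true a) +
      (1 - F a) * (logLoss F false b - logLoss F false a) = bernoulliKL (F a) (F b) := by
  simp only [logLoss, bernoulliKL, if_true, Bool.false_eq_true, if_false, one_div, Real.log_inv,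
    Real.log_div ha.1.ne' hb.1.ne', Real.log_div (sub_pos.mpr ha.2).ne' (sub_pos.mpr hb.2).ne',
    sub_neg_eq_add, neg_add_eq_sub]

end BinaryResponse

section OneBitMatrixCompletion

variable {d1 d2 n : ℕ} {F : ℝ → ℝ} {π : Fin d1 → Fin d2 → ℝ} {M Mstar : Matrix (Fin d1) (Fin d2) ℝ}

lemma mem_Icc_of_linfNorm_le {α : ℝ} (hM : linfNorm M ≤ α) (k : Fin d1) (l : Fin d2) :
    M k l ∈ Set.Icc (-α) α :=
  abs_le.mp <| (Finite.le_ciSup (fun l => |M k l|) l).trans <|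
    (Finite.le_ciSup (fun k => ⨆ l, |M k l|) k).trans hM

/-- The law of a single observation, an index pair together with its sign. -/
noncomputable def obsWeight (F : ℝ → ℝ) (π : Fin d1 → Fin d2 → ℝ)
    (M : Matrix (Fin d1) (Fin d2) ℝ) (s : (Fin d1 × Fin d2) × Bool) : ℝ :=
  π s.1.1 s.1.2 * if s.2 then F (M s.1.1 s.1.2) else 1 - F (M s.1.1 s.1.2)

lemma expectation_obsWeight (F : ℝ → ℝ) (π : Fin d1 → Fin d2 → ℝ)
    (M : Matrix (Fin d1) (Fin d2) ℝ) (f : (Fin d1 × Fin d2) × Bool → ℝ) :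
    expectation (obsWeight F π M) f =
      ∑ k, ∑ l, π k l * (F (M k l) * f ((k, l), true) + (1 - F (M k l)) * f ((k, l), false)) := by
  simp only [expectation, obsWeight, Fintype.sum_prod_type, Fintype.sum_bool, if_true,
    Bool.false_eq_true, if_false, mul_assoc, mul_add]

lemma expectation_obsWeight_comp_fst (F : ℝ → ℝ) (π : Fin d1 → Fin d2 → ℝ)
    (M : Matrix (Fin d1) (Fin d2) ℝ) (f : Fin d1 × Fin d2 → ℝ) :
    expectation (obsWeight F π M) (fun s => f s.1) = ∑ k, ∑ l, π k l * f (k, l) := by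
  simp only [expectation_obsWeight, ← add_mul, add_sub_cancel, one_mul]

lemma obsWeight_mem_stdSimplex (hπ0 : ∀ k l, 0 ≤ π k l) (hπ1 : ∑ k, ∑ l, π k l = 1)
    (hM : ∀ k l, F (M k l) ∈ Set.Ioo 0 1) : obsWeight F π M ∈ stdSimplex ℝ _ := by
  refine ⟨fun s => mul_nonneg (hπ0 _ _) ?_, ?_⟩
  · split_ifs
    exacts [(hM _ _).1.le, (sub_pos.mpr (hM _ _).2).le]
  · simpa only [expectation, mul_one, hπ1] using expectation_obsWeight_comp_fst F π M fun _ => 1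

lemma sum_sum_indicator_sampleWeight (F : ℝ → ℝ) (π : Fin d1 → Fin d2 → ℝ)
    (M : Matrix (Fin d1) (Fin d2) ℝ) (G : Set ((Fin n → Fin d1 × Fin d2) × (Fin n → Bool))) :
    ∑ S, ∑ y, G.indicator (fun p => sampleWeight F π M p.1 p.2) (S, y) =
      ∑ x : Fin n → (Fin d1 × Fin d2) × Bool,
        {x | (Prod.fst ∘ x, Prod.snd ∘ x) ∈ G}.indicator (productWeight (obsWeight F π M)) x := by
  rw [← Fintype.sum_prod_type']
  exact (Fintype.sum_equiv (Equiv.arrowProdEquivProdArrow (Fin n) (fun _ => Fin d1 × Fin d2)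
    fun _ => Bool) _ _ fun _ => rfl).symm

/-- The loss of `M` in excess of the loss of `Mstar` on a single observation. -/
noncomputable def excessLoss (F : ℝ → ℝ) (Mstar M : Matrix (Fin d1) (Fin d2) ℝ)
    (s : (Fin d1 × Fin d2) × Bool) : ℝ :=
  logLoss F s.2 (M s.1.1 s.1.2) - logLoss F s.2 (Mstar s.1.1 s.1.2)

lemma sum_excessLoss (F : ℝ → ℝ) (Mstar M : Matrix (Fin d1) (Fin d2) ℝ)
    (x : Fin n → (Fin d1 × Fin d2) × Bool) :
    ∑ t, excessLoss F Mstar M (x t) =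
      negLogLik F (Prod.fst ∘ x) (Prod.snd ∘ x) M -
        negLogLik F (Prod.fst ∘ x) (Prod.snd ∘ x) Mstar :=
  Finset.sum_sub_distrib _ _

lemma abs_excessLoss_sub_excessLoss_le {U : ℝ} (hMstar : ∀ k l, F (Mstar k l) ∈ Set.Ioo 0 1)
    (hM : ∀ k l, F (M k l) ∈ Set.Ioo 0 1)
    (hUstar : ∀ k l, Real.log (1 / (F (Mstar k l) * (1 - F (Mstar k l)))) ≤ U)
    (hU : ∀ k l, Real.log (1 / (F (M k l) * (1 - F (M k l)))) ≤ U)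
    (s s' : (Fin d1 × Fin d2) × Bool) :
    |excessLoss F Mstar M s - excessLoss F Mstar M s'| ≤ 2 * U := by
  have abs_le_U : ∀ s, |excessLoss F Mstar M s| ≤ U := fun s =>
    abs_sub_le_of_nonneg_of_le (logLoss_nonneg (hM _ _) _) (logLoss_le (hM _ _) (hU _ _) _)
      (logLoss_nonneg (hMstar _ _) _) (logLoss_le (hMstar _ _) (hUstar _ _) _)
  exact (abs_sub _ _).trans (by linarith [abs_le_U s, abs_le_U s'])

lemma sum_mul_sq_sub_le_expectation_excessLoss {s : Set ℝ} (hs : s.OrdConnected)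
    (hF : ∀ x ∈ s, DifferentiableAt ℝ F x) (h01 : ∀ x ∈ s, F x ∈ Set.Ioo 0 1)
    (hF' : ∀ x ∈ s, deriv F x ≠ 0) {β : ℝ}
    (hβ : ∀ x ∈ s, F x * (1 - F x) / deriv F x ^ 2 ≤ β) (hπ : ∀ k l, 0 ≤ π k l)
    (hMstar : ∀ k l, Mstar k l ∈ s) (hM : ∀ k l, M k l ∈ s) :
    ∑ k, ∑ l, π k l * (M k l - Mstar k l) ^ 2 ≤
      10 * β * expectation (obsWeight F π Mstar) (excessLoss F Mstar M) := by
  rw [expectation_obsWeight]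
  simp only [excessLoss, Finset.mul_sum, mul_left_comm (10 * β),
    mul_logLoss_sub_add_mul_logLoss_sub (h01 _ (hMstar _ _)) (h01 _ (hM _ _))]
  refine Finset.sum_le_sum fun k _ => Finset.sum_le_sum fun l _ =>
    mul_le_mul_of_nonneg_left ?_ (hπ k l)
  rw [← neg_sub, neg_sq]
  exact sq_sub_le_mul_bernoulliKL hs hF h01 hF' hβ (hMstar k l) (hM k l)

lemma marginalScale_mul_apply (hπ : ∀ k l, 0 < π k l) (M : Matrix (Fin d1) (Fin d2) ℝ)
    (k : Fin d1) (l : Fin d2) :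
    marginalScale π k l * (diagonal (fun k => √(∑ l, π k l)) * M *
      diagonal fun l => √(∑ k, π k l)) k l = M k l := by
  have row_pos : 0 < √(∑ l, π k l) :=
    Real.sqrt_pos.mpr (Finset.sum_pos (fun l _ => hπ k l) ⟨l, Finset.mem_univ l⟩)
  have col_pos : 0 < √(∑ k, π k l) :=
    Real.sqrt_pos.mpr (Finset.sum_pos (fun k _ => hπ k l) ⟨k, Finset.mem_univ k⟩)
  rw [mul_diagonal, diagonal_mul, marginalScale]
  field_simp

variable {s : Set ℝ} {L B : ℝ} {T : Type*} {𝓜 : T → Matrix (Fin d1) (Fin d2) ℝ}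

lemma rademacherComplexity_excessLoss_le [Finite T] [Nonempty T] (h1 : 1 ≤ d1) (h2 : 1 ≤ d2)
    (hs : Convex ℝ s) (hF : ∀ x ∈ s, DifferentiableAt ℝ F x) (h01 : ∀ x ∈ s, F x ∈ Set.Ioo 0 1)
    (hL0 : 0 ≤ L) (hL : ∀ x ∈ s, |deriv F x| / (F x * (1 - F x)) ≤ L)
    (hπ : ∀ k l, 0 < π k l) (h𝓜 : ∀ τ k l, 𝓜 τ k l ∈ s)
    (hB : ∀ τ, weightedTraceNorm π (𝓜 τ) ≤ B) (Mstar : Matrix (Fin d1) (Fin d2) ℝ)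
    (x : Fin n → (Fin d1 × Fin d2) × Bool) :
    rademacherComplexity (fun τ t => excessLoss F Mstar (𝓜 τ) (x t)) ≤
      L * (B * √(14 * Real.log (d1 + d2) *
        ⨆ i, ∑ t, leverage (marginalScale π) (x t).1 i)) := by
  calc rademacherComplexity (fun τ t => excessLoss F Mstar (𝓜 τ) (x t))
      ≤ rademacherComplexity fun τ t => L * 𝓜 τ (x t).1.1 (x t).1.2 := by
        refine rademacherComplexity_contraction fun t τ τ' => ?_
        rw [excessLoss, excessLoss, sub_sub_sub_cancel_right, ← mul_sub, abs_mul,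
          abs_of_nonneg hL0]
        exact abs_logLoss_sub_logLoss_le hs hF h01 hL _ (h𝓜 _ _ _) (h𝓜 _ _ _)
    _ = L * rademacherComplexity fun τ t => 𝓜 τ (x t).1.1 (x t).1.2 :=
        rademacherComplexity_const_mul hL0 _
    _ ≤ _ := by
        have := rademacherComplexity_le_of_traceNorm_le h1 h2 (marginalScale π)
          (fun t => (x t).1) hB
        simp only [marginalScale_mul_apply hπ] at this
        exact mul_le_mul_of_nonneg_left this hL0

variable {μ : ℝ}

lemma log_mul_sq_mul_le_of_min_le {N a b : ℝ} (ha : 1 ≤ a) (hb : 1 ≤ b) (hμ : 0 < μ)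
    (hN : μ * min a b * Real.log (a + b) ≤ N) :
    μ ^ 2 * (a * b) * Real.log (a + b) ≤ N * (μ * (a + b)) := by
  have mul_le : a * b ≤ (a + b) * min a b := by
    rw [← min_mul_max a b, mul_comm]
    gcongr
    exact max_le (by linarith) (by linarith)
  have log_nonneg : 0 ≤ Real.log (a + b) := Real.log_nonneg (by linarith)
  calc μ ^ 2 * (a * b) * Real.log (a + b)
      ≤ μ ^ 2 * ((a + b) * min a b) * Real.log (a + b) := by gcongr
    _ = μ * min a b * Real.log (a + b) * (μ * (a + b)) := by ring
    _ ≤ N * (μ * (a + b)) := by gcongr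

lemma expectation_iSup_sum_leverage_le (h1 : 1 ≤ d1) (h2 : 1 ≤ d2) (hμ : 0 < μ)
    (hπ : ∀ k l, 1 / (μ * d1 * d2) ≤ π k l)
    (hn : μ * (min d1 d2 : ℝ) * Real.log (d1 + d2) ≤ n)
    (hw : obsWeight F π M ∈ stdSimplex ℝ _) :
    expectation (productWeight (obsWeight F π M))
      (fun x : Fin n → (Fin d1 × Fin d2) × Bool =>
        ⨆ i, ∑ t, leverage (marginalScale π) (x t).1 i) ≤ 3 * (n * (μ * (d1 + d2))) := by
  have hd1 : (1 : ℝ) ≤ d1 := Nat.one_le_cast.mpr h1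
  have hd2 : (1 : ℝ) ≤ d2 := Nat.one_le_cast.mpr h2
  have : Nonempty (Fin d1 ⊕ Fin d2) := ⟨Sum.inl ⟨0, h1⟩⟩
  have maximal := expectation_iSup_sum_le (ι := Fin n) hw (by positivity)
    (fun i s => leverage_nonneg (marginalScale π) s.1 i)
    (fun i s => leverage_le (marginalScale_sq_le hμ hπ) s.1 i)
    (m := μ * (d1 + d2)) fun i => by
      rw [expectation_obsWeight_comp_fst F π M fun s => leverage (marginalScale π) s i]
      exact sum_mul_leverage_marginalScale_le hμ hπ i
  rw [Fintype.card_sum, Fintype.card_fin, Fintype.card_fin, Fintype.card_fin, Nat.cast_add]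
    at maximal
  linarith [log_mul_sq_mul_le_of_min_le hd1 hd2 hμ hn]

lemma expectation_rademacherComplexity_excessLoss_le [Finite T] [Nonempty T] (h1 : 1 ≤ d1)
    (h2 : 1 ≤ d2) (hs : Convex ℝ s) (hF : ∀ x ∈ s, DifferentiableAt ℝ F x)
    (h01 : ∀ x ∈ s, F x ∈ Set.Ioo 0 1) (hL0 : 0 ≤ L)
    (hL : ∀ x ∈ s, |deriv F x| / (F x * (1 - F x)) ≤ L) (hμ : 0 < μ)
    (hπ : ∀ k l, 1 / (μ * d1 * d2) ≤ π k l)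
    (hn : μ * (min d1 d2 : ℝ) * Real.log (d1 + d2) ≤ n) (h𝓜 : ∀ τ k l, 𝓜 τ k l ∈ s)
    (hB : ∀ τ, weightedTraceNorm π (𝓜 τ) ≤ B) (hw : obsWeight F π Mstar ∈ stdSimplex ℝ _) :
    expectation (productWeight (obsWeight F π Mstar))
      (fun x : Fin n → (Fin d1 × Fin d2) × Bool =>
        rademacherComplexity fun τ t => excessLoss F Mstar (𝓜 τ) (x t)) ≤
      7 * (L * B * √(n * (μ * (d1 + d2) * Real.log (d1 + d2)))) := by
  have hB0 : 0 ≤ B := ‹Nonempty T›.elim fun τ => (traceNorm_nonneg _).trans (hB τ)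
  have log_nonneg : 0 ≤ Real.log (d1 + d2 : ℝ) := by
    rw [← Nat.cast_add]
    exact Real.log_natCast_nonneg _
  have hπ_pos : ∀ k l, 0 < π k l := fun k l => lt_of_lt_of_le
    (one_div_pos.mpr (by have := Fin.pos k; have := Fin.pos l; positivity)) (hπ k l)
  set w := obsWeight F π Mstar
  have hw' : productWeight w ∈ stdSimplex ℝ (Fin n → (Fin d1 × Fin d2) × Bool) :=
    productWeight_mem_stdSimplex hw
  set V : (Fin n → (Fin d1 × Fin d2) × Bool) → ℝ :=
    fun x => ⨆ i, ∑ t, leverage (marginalScale π) (x t).1 i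
  have V_nonneg : ∀ x, 0 ≤ V x := fun x =>
    Real.iSup_nonneg fun i => Finset.sum_nonneg fun t _ => leverage_nonneg _ _ _
  have variance_le : 14 * Real.log (d1 + d2) * expectation (productWeight w) V ≤
      7 ^ 2 * (n * (μ * (d1 + d2) * Real.log (d1 + d2))) := by
    have : 0 ≤ n * (μ * (d1 + d2) * Real.log (d1 + d2)) := by positivity
    nlinarith [mul_le_mul_of_nonneg_left
      (expectation_iSup_sum_leverage_le h1 h2 hμ hπ hn hw) log_nonneg]
  calc _ ≤ expectation (productWeight w) fun x => L * (B * √(14 * Real.log (d1 + d2) * V x)) :=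
        expectation_mono hw'.1 fun x =>
          rademacherComplexity_excessLoss_le h1 h2 hs hF h01 hL0 hL hπ_pos h𝓜 hB Mstar x
    _ ≤ L * (B * √(14 * Real.log (d1 + d2) * expectation (productWeight w) V)) := by
        rw [expectation_const_mul, expectation_const_mul, ← expectation_const_mul _ V]
        gcongr
        exact expectation_sqrt_le hw' fun x => by have := V_nonneg x; positivity
    _ ≤ L * (B * √(7 ^ 2 * (n * (μ * (d1 + d2) * Real.log (d1 + d2))))) := by gcongr
    _ = 7 * (L * B * √(n * (μ * (d1 + d2) * Real.log (d1 + d2)))) := by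
        rw [Real.sqrt_mul (by norm_num), Real.sqrt_sq (by norm_num)]
        ring

lemma sqrt_mul_eq_mul_sqrt_div {N : ℝ} (hN : 0 < N) (X : ℝ) : √(N * X) = N * √(X / N) := by
  rw [← Real.sqrt_sq hN.le, ← Real.sqrt_mul (sq_nonneg _), Real.sqrt_sq hN.le]
  congr 1
  field_simp

lemma log_one_div_mul_one_sub_pos {p : ℝ} (hp : p ∈ Set.Ioo 0 1) :
    0 < Real.log (1 / (p * (1 - p))) := by
  have one_sub_pos : 0 < 1 - p := sub_pos.mpr hp.2
  refine Real.log_pos ((one_lt_div (mul_pos hp.1 one_sub_pos)).mpr ?_)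
  nlinarith [hp.1]

lemma one_sub_le_sum_indicator_supDeviation_excessLoss [Finite T] [Nonempty T] (h1 : 1 ≤ d1)
    (h2 : 1 ≤ d2) (hs : Convex ℝ s) (hF : ∀ x ∈ s, DifferentiableAt ℝ F x)
    (h01 : ∀ x ∈ s, F x ∈ Set.Ioo 0 1)
    (hL : ∀ x ∈ s, |deriv F x| / (F x * (1 - F x)) ≤ L) {U : ℝ}
    (hU : ∀ x ∈ s, Real.log (1 / (F x * (1 - F x))) ≤ U) (hμ : 0 < μ)
    (hπ : ∀ k l, 1 / (μ * d1 * d2) ≤ π k l) (hn0 : 0 < n)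
    (hn : μ * (min d1 d2 : ℝ) * Real.log (d1 + d2) ≤ n)
    (hMstar : ∀ k l, Mstar k l ∈ s) (h𝓜 : ∀ τ k l, 𝓜 τ k l ∈ s)
    (hB : ∀ τ, weightedTraceNorm π (𝓜 τ) ≤ B) (hw : obsWeight F π Mstar ∈ stdSimplex ℝ _)
    {δ : ℝ} (hδ : 0 < δ) :
    1 - δ ≤ ∑ x : Fin n → (Fin d1 × Fin d2) × Bool,
      {x | supDeviation (obsWeight F π Mstar) (fun τ => excessLoss F Mstar (𝓜 τ)) x ≤
        n * (14 * (L * B * √(μ * (d1 + d2) * Real.log (d1 + d2) / n) +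
          U * √(Real.log (1 / δ) / n)))}.indicator (productWeight (obsWeight F π Mstar)) x := by
  have hw' : productWeight (obsWeight F π Mstar) ∈ stdSimplex ℝ (Fin n → _) :=
    productWeight_mem_stdSimplex hw
  have cast_pos : (0 : ℝ) < n := Nat.cast_pos.mpr hn0
  obtain ⟨x₀, hx₀⟩ : s.Nonempty := ⟨_, hMstar ⟨0, h1⟩ ⟨0, h2⟩⟩
  have hL0 : 0 ≤ L := (div_nonneg (abs_nonneg _)
    (mul_nonneg (h01 x₀ hx₀).1.le (sub_nonneg.mpr (h01 x₀ hx₀).2.le))).trans (hL x₀ hx₀)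
  have hU0 : 0 < U := (log_one_div_mul_one_sub_pos (h01 x₀ hx₀)).trans_le (hU x₀ hx₀)
  have mean_le := (expectation_supDeviation_le (ι := Fin n) hw _).trans <|
    mul_le_mul_of_nonneg_left (expectation_rademacherComplexity_excessLoss_le h1 h2 hs hF h01 hL0 hL
      hμ hπ hn h𝓜 hB hw) zero_le_two
  rw [sqrt_mul_eq_mul_sqrt_div cast_pos] at mean_le
  have fluctuation_le : 2 * U * √(2 * n * Real.log (1 / δ)) ≤
      n * (14 * (U * √(Real.log (1 / δ) / n))) := by
    have sqrt_two_le : √2 ≤ 7 := Real.sqrt_le_iff.mpr ⟨by norm_num, by norm_num⟩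
    calc 2 * U * √(2 * n * Real.log (1 / δ))
        = 2 * U * (√2 * (n * √(Real.log (1 / δ) / n))) := by
          rw [mul_assoc 2 (n : ℝ), Real.sqrt_mul zero_le_two, sqrt_mul_eq_mul_sqrt_div cast_pos]
      _ ≤ 2 * U * (7 * (n * √(Real.log (1 / δ) / n))) := by gcongr
      _ = n * (14 * (U * √(Real.log (1 / δ) / n))) := by ring
  have tail := one_sub_le_sum_indicator_of_bounded_differences hw (mul_pos two_pos hU0) hn0
    (abs_supDeviation_sub_supDeviation_update_le (obsWeight F π Mstar)
      (f := fun τ => excessLoss F Mstar (𝓜 τ)) fun τ =>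
        abs_excessLoss_sub_excessLoss_le (fun k l => h01 _ (hMstar k l))
          (fun k l => h01 _ (h𝓜 τ k l)) (fun k l => hU _ (hMstar k l))
          fun k l => hU _ (h𝓜 τ k l)) hδ
  refine tail.trans <| Finset.sum_le_sum fun x _ =>
    Set.indicator_le_indicator_of_subset (fun x hx => ?_) hw'.1 x
  rw [Set.mem_ofPred_eq] at hx ⊢
  linarith

lemma sum_mul_sq_sub_le_of_supDeviation_le [Finite T] (h1 : 1 ≤ d1) (h2 : 1 ≤ d2)
    (hs : s.OrdConnected) (hF : ∀ x ∈ s, DifferentiableAt ℝ F x)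
    (h01 : ∀ x ∈ s, F x ∈ Set.Ioo 0 1) (hF' : ∀ x ∈ s, deriv F x ≠ 0) {β : ℝ}
    (hβ : ∀ x ∈ s, F x * (1 - F x) / deriv F x ^ 2 ≤ β) (hπ : ∀ k l, 0 ≤ π k l) (hn0 : 0 < n)
    (hMstar : ∀ k l, Mstar k l ∈ s) (h𝓜 : ∀ τ k l, 𝓜 τ k l ∈ s)
    {x : Fin n → (Fin d1 × Fin d2) × Bool} {τ : T}
    (hτ : negLogLik F (Prod.fst ∘ x) (Prod.snd ∘ x) (𝓜 τ) ≤
      negLogLik F (Prod.fst ∘ x) (Prod.snd ∘ x) Mstar) {A : ℝ}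
    (hx : supDeviation (obsWeight F π Mstar) (fun τ => excessLoss F Mstar (𝓜 τ)) x ≤ n * A) :
    ∑ k, ∑ l, π k l * (𝓜 τ k l - Mstar k l) ^ 2 ≤ 10 * β * A := by
  have hβ0 : 0 ≤ β := (div_nonneg (mul_nonneg (h01 _ (hMstar ⟨0, h1⟩ ⟨0, h2⟩)).1.le
    (sub_nonneg.mpr (h01 _ (hMstar _ _)).2.le)) (sq_nonneg _)).trans (hβ _ (hMstar _ _))
  have empirical_nonpos : ∑ t, excessLoss F Mstar (𝓜 τ) (x t) ≤ 0 := by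
    rw [sum_excessLoss]
    exact sub_nonpos.mpr hτ
  have mean_le : expectation (obsWeight F π Mstar) (excessLoss F Mstar (𝓜 τ)) ≤ A := by
    refine le_of_mul_le_mul_left ?_ (Nat.cast_pos.mpr hn0 : (0 : ℝ) < n)
    have := card_mul_expectation_le_supDeviation (obsWeight F π Mstar)
      (f := fun τ => excessLoss F Mstar (𝓜 τ)) empirical_nonpos
    rw [Fintype.card_fin] at this
    exact this.trans hx
  exact (sum_mul_sq_sub_le_expectation_excessLoss hs hF h01 hF' hβ hπ hMstar (h𝓜 τ)).trans
    (by gcongr)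

lemma sampleSize_pos (h1 : 1 ≤ d1) (h2 : 1 ≤ d2) (hμ : 0 < μ)
    (hn : μ * (min d1 d2 : ℝ) * Real.log (d1 + d2) ≤ n) : 0 < n := by
  have hd1 : (1 : ℝ) ≤ d1 := Nat.one_le_cast.mpr h1
  have hd2 : (1 : ℝ) ≤ d2 := Nat.one_le_cast.mpr h2
  have log_pos : 0 < Real.log (d1 + d2 : ℝ) := Real.log_pos (by linarith)
  exact Nat.cast_pos.mp (lt_of_lt_of_le (by positivity) hn)

/-- The supremum of the empirical process is taken over the values of the estimator, a finite class
whatever the constraint set. -/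
theorem weightedTraceNorm_MLE_upper_bound_general (h1 : 1 ≤ d1) (h2 : 1 ≤ d2) (hs : Convex ℝ s)
    (hF : ∀ x ∈ s, DifferentiableAt ℝ F x) (h01 : ∀ x ∈ s, F x ∈ Set.Ioo 0 1)
    (hF' : ∀ x ∈ s, deriv F x ≠ 0) (hL : ∀ x ∈ s, |deriv F x| / (F x * (1 - F x)) ≤ L) {β U : ℝ}
    (hβ : ∀ x ∈ s, F x * (1 - F x) / deriv F x ^ 2 ≤ β)
    (hU : ∀ x ∈ s, Real.log (1 / (F x * (1 - F x))) ≤ U) (hμ : 0 < μ)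
    (hπ : ∀ k l, 1 / (μ * d1 * d2) ≤ π k l) (hπ1 : ∑ k, ∑ l, π k l = 1)
    (hn : μ * (min d1 d2 : ℝ) * Real.log (d1 + d2) ≤ n) (hMstar : ∀ k l, Mstar k l ∈ s)
    {Mhat : (Fin n → Fin d1 × Fin d2) → (Fin n → Bool) → Matrix (Fin d1) (Fin d2) ℝ}
    (hMhat : ∀ S y k l, Mhat S y k l ∈ s) (hB : ∀ S y, weightedTraceNorm π (Mhat S y) ≤ B)
    (hfit : ∀ S y, negLogLik F S y (Mhat S y) ≤ negLogLik F S y Mstar) {δ : ℝ} (hδ : 0 < δ) :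
    1 - δ ≤ ∑ S, ∑ y, Set.indicator
      {p | ∑ k, ∑ l, π k l * (Mhat p.1 p.2 k l - Mstar k l) ^ 2 ≤
        140 * β * (L * B * √(μ * (d1 + d2) * Real.log (d1 + d2) / n) +
          U * √(Real.log (1 / δ) / n))}
      (fun p => sampleWeight F π Mstar p.1 p.2) (S, y) := by
  have : Nonempty (Fin d1 × Fin d2) := ⟨⟨0, h1⟩, ⟨0, h2⟩⟩
  have hπ0 : ∀ k l, 0 ≤ π k l := fun k l => le_trans (by positivity) (hπ k l)
  have hn0 : 0 < n := sampleSize_pos h1 h2 hμ hn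
  have hw := obsWeight_mem_stdSimplex hπ0 hπ1 fun k l => h01 _ (hMstar k l)
  let 𝓜 (x : Fin n → (Fin d1 × Fin d2) × Bool) := Mhat (Prod.fst ∘ x) (Prod.snd ∘ x)
  rw [sum_sum_indicator_sampleWeight]
  refine (one_sub_le_sum_indicator_supDeviation_excessLoss (𝓜 := 𝓜) h1 h2 hs hF h01 hL hU hμ hπ
    hn0 hn hMstar (fun _ => hMhat _ _) (fun _ => hB _ _) hw hδ).trans <|
      Finset.sum_le_sum fun x _ => Set.indicator_le_indicator_of_subset (fun x hx => ?_)
        (productWeight_mem_stdSimplex hw).1 x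
  have sq_le := sum_mul_sq_sub_le_of_supDeviation_le h1 h2 hs.ordConnected hF h01 hF' hβ hπ0 hn0
    hMstar (fun _ => hMhat _ _) (hfit (Prod.fst ∘ x) (Prod.snd ∘ x)) hx
  exact sq_le.trans_eq (by ring)

end OneBitMatrixCompletion

/-- upper bound for the weighted trace-norm constrained maximum likelihood
estimator of 1-bit matrix completion under a general sampling distribution with
`π_{kl} ≥ 1/(μ d1 d2)`: there is an absolute constant `C > 0` such that, for
`n ≥ μ min(d1,d2) log d`, any minimizer `M̂` of the negative log-likelihood over
`K_{Π,*}(r, α)` satisfies, with probability at least `1 − δ`,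
`‖M̂ − M*‖_Π² ≤ C β_α { L_α α √(μ r d log(d)/n) + U_α √(log(4/δ)/n) }`, `d = d1 + d2`. -/
theorem weightedTraceNorm_MLE_upper_bound :
    ∃ C : ℝ, 0 < C ∧
      ∀ (d1 d2 n r : ℕ) (α μ : ℝ) (F : ℝ → ℝ) (π : Fin d1 → Fin d2 → ℝ)
        (Mstar : Matrix (Fin d1) (Fin d2) ℝ) (Lα βα Uα δ : ℝ)
        (Mhat : (Fin n → Fin d1 × Fin d2) → (Fin n → Bool) →
          Matrix (Fin d1) (Fin d2) ℝ),
        1 ≤ d1 → 1 ≤ d2 → 1 ≤ r → 0 < α →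
        Differentiable ℝ F → (∀ x, 0 < F x ∧ F x < 1) →
        (∀ x ∈ Set.Icc (-α) α, deriv F x ≠ 0) →
        IsLUB ((fun x => |deriv F x| / (F x * (1 - F x))) '' Set.Icc (-α) α) Lα →
        IsLUB ((fun x => F x * (1 - F x) / (deriv F x) ^ 2) '' Set.Icc (-α) α) βα →
        IsLUB ((fun x => Real.log (1 / (F x * (1 - F x)))) '' Set.Icc (-α) α) Uα →
        (∀ k l, 0 ≤ π k l) → (∑ k, ∑ l, π k l = 1) →
        1 ≤ μ → (∀ k l, 1 / (μ * d1 * d2) ≤ π k l) →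
        weightedTraceNorm π Mstar ≤ α * Real.sqrt r → linfNorm Mstar ≤ α →
        μ * (min d1 d2 : ℝ) * Real.log (d1 + d2 : ℝ) ≤ n →
        0 < δ →
        (∀ (S : Fin n → Fin d1 × Fin d2) (y : Fin n → Bool),
          (weightedTraceNorm π (Mhat S y) ≤ α * Real.sqrt r ∧
            linfNorm (Mhat S y) ≤ α) ∧
          ∀ M : Matrix (Fin d1) (Fin d2) ℝ,
            weightedTraceNorm π M ≤ α * Real.sqrt r → linfNorm M ≤ α →
            negLogLik F S y (Mhat S y) ≤ negLogLik F S y M) →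
        1 - δ ≤
          ∑ S : Fin n → Fin d1 × Fin d2, ∑ y : Fin n → Bool,
            Set.indicator
              { p : (Fin n → Fin d1 × Fin d2) × (Fin n → Bool) |
                ∑ k, ∑ l, π k l * (Mhat p.1 p.2 k l - Mstar k l) ^ 2 ≤
                  C * βα *
                    (Lα * α *
                      Real.sqrt (μ * r * (d1 + d2 : ℝ) * Real.log (d1 + d2 : ℝ) / n) +
                    Uα * Real.sqrt (Real.log (4 / δ) / n)) }
              (fun p => sampleWeight F π Mstar p.1 p.2) (S, y) := by
  refine ⟨140, by norm_num, ?_⟩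
  intro d1 d2 n r α μ F π Mstar L β U δ Mhat h1 h2 _ _ hF h01 hF' hL hβ hU _ hπ1 hμ hπ
    hMstar_norm hMstar_linf hn hδ hMhat
  have tail := weightedTraceNorm_MLE_upper_bound_general h1 h2 (convex_Icc (-α) α)
    (fun x _ => hF x) (fun x _ => h01 x) hF' (fun x hx => hL.1 ⟨x, hx, rfl⟩)
    (fun x hx => hβ.1 ⟨x, hx, rfl⟩) (fun x hx => hU.1 ⟨x, hx, rfl⟩) (zero_lt_one.trans_le hμ)
    hπ hπ1 hn (mem_Icc_of_linfNorm_le hMstar_linf)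
    (fun S y => mem_Icc_of_linfNorm_le (hMhat S y).1.2) (fun S y => (hMhat S y).1.1)
    (fun S y => (hMhat S y).2 Mstar hMstar_norm hMstar_linf) (δ := δ / 4) (by positivity)
  have rate_eq : L * (α * √r) * √(μ * (d1 + d2) * Real.log (d1 + d2) / n) =
      L * α * √(μ * r * (d1 + d2) * Real.log (d1 + d2) / n) := by
    rw [← mul_assoc, mul_assoc (L * α), ← Real.sqrt_mul r.cast_nonneg]
    ring_nf
  rw [one_div_div, rate_eq] at tail
  exact le_trans (by linarith) tail
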